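/- For every integer n ≥ 1 and every r ∈ (0, π/2), one has lim_{t→0⁺} (4πt)^{2n+3/2}·(sin r/r)^{2n+1}·(1 − r·cot r)^{3/2}·e^{r²/(4t)}·p_t(r, 0) = 1; that is, p_t(r,0) ∼ (1/(4πt)^{2n+3/2})·(r/sin r)^{2n+1}·e^{−r²/(4t)}·(1 − r·cot r)^{−3/2} as t → 0⁺. (Note that 1 − r·cot r > 0 for r ∈ (0, π/2).) -/

import Mathlib

open Real MeasureTheory Filter Topology Set

noncomputable section

/-- The defining formula of the Jacobi polynomial `P_k^{(α,β)}` on `(-1,1)`. -/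
def jacobiFormula (k α β : ℕ) (x : ℝ) : ℝ :=
  ((-1 : ℝ) ^ k / (2 ^ k * Nat.factorial k)) * (1 - x) ^ (-(α : ℤ)) * (1 + x) ^ (-(β : ℤ)) *
    iteratedDeriv k (fun y => (1 - y) ^ (α + k) * (1 + y) ^ (β + k)) x

/-- `J k α β` is the Jacobi polynomial `P_k^{(α,β)}`: a polynomial function satisfying the
defining formula on `(-1,1)`. -/
def IsJacobi (J : ℕ → ℕ → ℕ → ℝ → ℝ) : Prop :=
  ∀ k α β : ℕ, (∃ p : Polynomial ℝ, ∀ x : ℝ, J k α β x = p.eval x) ∧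
    ∀ x ∈ Set.Ioo (-1 : ℝ) 1, J k α β x = jacobiFormula k α β x

/-- The vertical factor `sin((m+1)η)/sin η`, extended by its limit `m+1` at `η = 0`. -/
def vertFactor (m : ℕ) (η : ℝ) : ℝ :=
  if η = 0 then (m + 1 : ℝ) else Real.sin ((m + 1) * η) / Real.sin η

/-- The general term of the double series defining the subelliptic heat kernel of the
quaternionic Hopf fibration on `S^{4n+3}`. -/
def pTerm (n : ℕ) (J : ℕ → ℕ → ℕ → ℝ → ℝ) (t r η : ℝ) (mk : ℕ × ℕ) : ℝ :=
  (Real.Gamma (2 * n) / (2 * Real.pi ^ (2 * n + 2))) *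
    (2 * (mk.2 : ℝ) + mk.1 + 2 * n + 1) * ((mk.1 : ℝ) + 1) *
    (Nat.choose (mk.2 + mk.1 + 2 * n) (2 * n - 1) : ℝ) *
    Real.exp (-(4 * ((mk.2 : ℝ) * (mk.2 + 2 * n + mk.1 + 1) + n * mk.1)) * t) *
    vertFactor mk.1 η * Real.cos r ^ mk.1 * J mk.2 (2 * n - 1) (mk.1 + 1) (Real.cos (2 * r))

/-- The subelliptic heat kernel of the quaternionic Hopf fibration on `S^{4n+3}`. -/
def pKernel (n : ℕ) (J : ℕ → ℕ → ℕ → ℝ → ℝ) (t r η : ℝ) : ℝ :=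
  ∑' mk : ℕ × ℕ, pTerm n J t r η mk

/-- The defining formula of the Gegenbauer polynomial `C_m^{2n+1}` on `(-1,1)`. -/
def gegenbauerFormula (n m : ℕ) (x : ℝ) : ℝ :=
  ((-1 : ℝ) ^ m / 2 ^ m) *
    (Real.Gamma ((m : ℝ) + 4 * n + 2) * Real.Gamma (2 * (n : ℝ) + 3 / 2) /
      (Real.Gamma (4 * (n : ℝ) + 2) * Real.Gamma ((m : ℝ) + 1) *
        Real.Gamma (2 * (n : ℝ) + m + 3 / 2))) *
    (1 - x ^ 2) ^ (-(2 * (n : ℝ) + 1 / 2)) *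
    iteratedDeriv m (fun y => (1 - y ^ 2) ^ (2 * (n : ℝ) + m + 1 / 2)) x

/-- `C m` is the Gegenbauer polynomial `C_m^{2n+1}`. -/
def IsGegenbauer (n : ℕ) (C : ℕ → ℝ → ℝ) : Prop :=
  ∀ m : ℕ, (∃ p : Polynomial ℝ, ∀ x : ℝ, C m x = p.eval x) ∧
    ∀ x ∈ Set.Ioo (-1 : ℝ) 1, C m x = gegenbauerFormula n m x

/-- The Riemannian heat kernel of `S^{4n+3}`. -/
def qKernel (n : ℕ) (C : ℕ → ℝ → ℝ) (t x : ℝ) : ℝ :=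
  (Real.Gamma (2 * n + 1) / (2 * Real.pi ^ (2 * n + 2))) *
    ∑' m : ℕ, ((m : ℝ) + 2 * n + 1) * Real.exp (-((m : ℝ) * (m + 4 * n + 2)) * t) * C m x

/-- The general term of the double series defining the subelliptic heat kernel on `CP^{2n+1}`. -/
def hTerm (n : ℕ) (J : ℕ → ℕ → ℕ → ℝ → ℝ) (t r φ : ℝ) (mk : ℕ × ℕ) : ℝ :=
  (Real.Gamma (2 * n) / (4 * Real.pi ^ (2 * n + 2))) *
    (2 * (mk.2 : ℝ) + 2 * mk.1 + 2 * n + 1) * (2 * (mk.1 : ℝ) + 1) *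
    (Nat.choose (mk.2 + 2 * mk.1 + 2 * n) (2 * n - 1) : ℝ) *
    Real.exp (-(4 * (mk.2 : ℝ) * (mk.2 + 2 * n + 2 * mk.1 + 1) + 8 * n * mk.1) * t) *
    Real.cos r ^ (2 * mk.1) * J mk.1 0 0 (Real.cos (2 * φ)) *
    J mk.2 (2 * n - 1) (2 * mk.1 + 1) (Real.cos (2 * r))

/-- The subelliptic heat kernel of the fibration `CP^1 → CP^{2n+1} → HP^n`. -/
def hKernel (n : ℕ) (J : ℕ → ℕ → ℕ → ℝ → ℝ) (t r φ : ℝ) : ℝ :=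
  ∑' mk : ℕ × ℕ, hTerm n J t r φ mk

end


section Jac
open Polynomial

lemma aux_iteratedDeriv_poly (P : Polynomial ℝ) (k : ℕ) (x : ℝ) :
    iteratedDeriv k (fun y => P.eval y) x = (derivative^[k] P).eval x := by
  induction k generalizing P with
  | zero => simp
  | succ k ih =>
    rw [iteratedDeriv_succ']
    have : deriv (fun y => P.eval y) = fun y => (derivative P).eval y := by
      ext y; simp
    rw [this, ih, Function.iterate_succ_apply]

lemma aux_jac_vander (α β k : ℕ) (c : ℝ) :
    ∑ i ∈ Finset.range (k + 1), ((α + k).choose (k - i) : ℝ) * ((β + k).choose i : ℝ) *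
      (c - 1) ^ i * c ^ (k - i) =
    ∑ e ∈ Finset.range (k + 1), (-1 : ℝ) ^ e * c ^ (k - e) * ((β + k).choose e : ℝ) *
      ((α + β + 2 * k - e).choose (k - e) : ℝ) := by
  have h1 : ∀ i ∈ Finset.range (k + 1), ((α + k).choose (k - i) : ℝ) * ((β + k).choose i : ℝ) *
      (c - 1) ^ i * c ^ (k - i) = ∑ e ∈ Finset.range (i + 1),
      ((α + k).choose (k - i) : ℝ) * ((β + k).choose i : ℝ) * (i.choose e) * (-1) ^ e
        * c ^ (k - e) := by
    intro i hi
    have hi' : i ≤ k := by simpa [Nat.lt_succ_iff] using hi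
    rw [sub_eq_add_neg, add_comm c, add_pow, Finset.mul_sum, Finset.sum_mul]
    refine Finset.sum_congr rfl fun e he => ?_
    have he' : e ≤ i := by simpa [Nat.lt_succ_iff] using he
    have : c ^ (k - e) = c ^ (i - e) * c ^ (k - i) := by
      rw [← pow_add]; congr 1; omega
    rw [this]; ring
  rw [Finset.sum_congr rfl h1]
  rw [Finset.sum_comm' (t' := Finset.range (k + 1)) (s' := fun e => Finset.Ico e (k + 1))
    (by intro x y; simp only [Finset.mem_range, Finset.mem_Ico]; omega)]
  refine Finset.sum_congr rfl fun e he => ?_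
  have he' : e ≤ k := by simpa [Nat.lt_succ_iff] using he
  have hv := Nat.add_choose_eq (β + k - e) (α + k) (k - e)
  have e1 : α + β + 2 * k - e = β + k - e + (α + k) := by omega
  rw [e1, hv, Finset.Nat.sum_antidiagonal_eq_sum_range_succ_mk, Finset.sum_Ico_eq_sum_range]
  have e2 : k + 1 - e = (k - e) + 1 := by omega
  rw [e2]
  push_cast
  rw [Finset.mul_sum]
  refine Finset.sum_congr rfl fun j hj => ?_
  have hj' : j ≤ k - e := by simpa [Nat.lt_succ_iff] using hj
  have e3 : k - (e + j) = k - e - j := by omega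
  have e4 : ((β + k).choose (e + j) : ℝ) * ((e + j).choose e : ℝ)
      = (β + k).choose e * (β + k - e).choose j := by
    have := Nat.choose_mul (n := β + k) (k := e + j) (s := e) (by omega)
    rw [Nat.add_sub_cancel_left] at this
    exact_mod_cast this
  rw [e3]
  linear_combination ((α + k).choose (k - e - j) : ℝ) * (-1) ^ e * c ^ (k - e) * e4

lemma aux_jac_leib (α β k : ℕ) (x : ℝ) (hx : x ∈ Set.Ioo (-1 : ℝ) 1) :
    jacobiFormula k α β x = ∑ i ∈ Finset.range (k + 1),
      ((α + k).choose (k - i) : ℝ) * ((β + k).choose i : ℝ) *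
      ((1 + x) / 2 - 1) ^ i * ((1 + x) / 2) ^ (k - i) := by
  have h1 : (1 - x) ≠ 0 := by have := hx.2; intro h; linarith
  have h2 : (1 + x) ≠ 0 := by have := hx.1; intro h; linarith
  unfold jacobiFormula
  have hP : (fun y : ℝ => (1 - y) ^ (α + k) * (1 + y) ^ (β + k)) =
      fun y => (C ((-1 : ℝ) ^ (α + k)) * ((X - C 1) ^ (α + k) * (X + C 1) ^ (β + k)) : ℝ[X]).eval y := by
    ext y
    simp only [eval_mul, eval_pow, eval_sub, eval_add, eval_X, eval_C]
    rw [← mul_assoc, ← mul_pow]; ring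
  rw [hP, aux_iteratedDeriv_poly, iterate_derivative_C_mul, iterate_derivative_mul]
  simp only [iterate_derivative_X_sub_pow, iterate_derivative_X_add_pow]
  rw [eval_mul, eval_C, eval_finsetSum, Finset.mul_sum, Finset.mul_sum]
  refine Finset.sum_congr rfl fun i hi => ?_
  have hi' : i ≤ k := by simpa [Nat.lt_succ_iff] using hi
  simp only [nsmul_eq_mul, eval_mul, eval_natCast, eval_pow, eval_sub, eval_add, eval_X, eval_C]
  have e1 : α + k - (k - i) = α + i := by omega
  have e2 : β + k - i = β + (k - i) := by omega
  rw [e1, e2, pow_add (x - 1), pow_add (x + 1), pow_add (-1 : ℝ)]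
  have e3 : (x - 1) ^ α = (-1) ^ α * (1 - x) ^ α := by rw [← mul_pow]; ring
  have e4 : ((α + k).descFactorial (k - i) : ℝ) = (k - i).factorial * (α + k).choose (k - i) := by
    exact_mod_cast Nat.descFactorial_eq_factorial_mul_choose _ _
  have e5 : ((β + k).descFactorial i : ℝ) = i.factorial * (β + k).choose i := by
    exact_mod_cast Nat.descFactorial_eq_factorial_mul_choose _ _
  have e6 : (k.choose i : ℝ) * i.factorial * (k - i).factorial = k.factorial := by
    exact_mod_cast Nat.choose_mul_factorial_mul_factorial hi'
  rw [e3, e4, e5, zpow_neg, zpow_neg, zpow_natCast, zpow_natCast]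
  have e7 : (2 : ℝ) ^ k = 2 ^ i * 2 ^ (k - i) := by rw [← pow_add]; congr 1; omega
  have e8 : ((1 + x) / 2 - 1) = (x - 1) / 2 := by ring
  rw [e8, div_pow, div_pow, e7, ← e6]
  have f1 : ((k.choose i : ℝ)) ≠ 0 := by exact_mod_cast (Nat.choose_pos hi').ne'
  have f2 : ((i.factorial : ℝ)) ≠ 0 := by positivity
  have f3 : (((k - i).factorial : ℝ)) ≠ 0 := by positivity
  have f4 : ((-1 : ℝ) ^ α) * (-1) ^ α = 1 := by rw [← mul_pow]; simp
  have f5 : ((-1 : ℝ) ^ k) * (-1) ^ k = 1 := by rw [← mul_pow]; simp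
  have f6 : (1 + x) = x + 1 := by ring
  have h2' : x + 1 ≠ 0 := by rw [← f6]; exact h2
  rw [f6]
  field_simp
  linear_combination ((α + k).choose (k - i) : ℝ) * ((β + k).choose i) * (x - 1) ^ i * ((-1) ^ k * (-1) ^ k * f4 + f5)

lemma aux_jac (α β k : ℕ) (x : ℝ) (hx : x ∈ Set.Ioo (-1 : ℝ) 1) :
    jacobiFormula k α β x = ∑ e ∈ Finset.range (k + 1),
      (-1 : ℝ) ^ e * ((1 + x) / 2) ^ (k - e) * ((β + k).choose e : ℝ) *
      ((α + β + 2 * k - e).choose (k - e) : ℝ) := by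
  rw [aux_jac_leib α β k x hx, aux_jac_vander]

end Jac


section Cheb
open Polynomial Polynomial.Chebyshev

noncomputable def chebS (q j : ℕ) : ℝ[X] :=
  ∑ s ∈ Finset.range (j + 1), C ((-1 : ℝ) ^ s *
    (q.factorial * (q + j - s).choose q * (j - s).choose s)) * (2 * X) ^ (j - 2 * s)

lemma chebS_zero_rec (j : ℕ) : chebS 0 (j + 2) = 2 * X * chebS 0 (j + 1) - chebS 0 j := by
  unfold chebS
  simp only [Nat.factorial_zero, Nat.cast_one, Nat.choose_zero_right, one_mul]
  have h1 : 2 * X * ∑ s ∈ Finset.range (j + 1 + 1), C ((-1 : ℝ) ^ s * ((j + 1 - s).choose s : ℝ)) * (2 * X) ^ (j + 1 - 2 * s)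
      = ∑ s ∈ Finset.range (j + 1 + 1), C ((-1 : ℝ) ^ s * ((j + 1 - s).choose s : ℝ)) * (2 * X) ^ (j + 2 - 2 * s) := by
    rw [Finset.mul_sum]
    refine Finset.sum_congr rfl fun s hs => ?_
    by_cases h : 2 * s ≤ j + 1
    · have : j + 2 - 2 * s = (j + 1 - 2 * s) + 1 := by omega
      rw [this, pow_succ]; ring
    · rw [Nat.choose_eq_zero_of_lt (by omega)]; simp
  rw [h1]
  have h2 : ∑ s ∈ Finset.range (j + 1), C ((-1 : ℝ) ^ s * ((j - s).choose s : ℝ)) * (2 * X) ^ (j - 2 * s)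
     = - ∑ s ∈ Finset.range (j + 1), C ((-1 : ℝ) ^ (s+1) * ((j - s).choose s : ℝ)) * (2 * X) ^ (j + 2 - 2 * (s + 1)) := by
    rw [← Finset.sum_neg_distrib]
    refine Finset.sum_congr rfl fun s hs => ?_
    have : j + 2 - 2 * (s + 1) = j - 2 * s := by omega
    rw [this, pow_succ]
    simp
  rw [h2, sub_neg_eq_add, Finset.sum_range_succ (n := j + 2), Nat.choose_eq_zero_of_lt (by omega : j + 2 - (j + 2) < j + 2)]
  simp only [Nat.cast_zero, mul_zero, map_zero, zero_mul, add_zero]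
  rw [Finset.sum_range_succ' _ (j + 1), Finset.sum_range_succ' _ (j + 1)]
  rw [show ∀ a b c : ℝ[X], a + b + c = (a + c) + b by intros; ring, ← Finset.sum_add_distrib]
  simp only [Nat.sub_zero, Nat.choose_zero_right]
  congr 1
  refine Finset.sum_congr rfl fun s hs => ?_
  have hs' : s ≤ j := by simpa [Nat.lt_succ_iff] using hs
  have e1 : j + 2 - (s + 1) = (j - s) + 1 := by omega
  have e2 : j + 1 - (s + 1) = j - s := by omega
  rw [e1, e2, Nat.choose_succ_succ, ← add_mul, ← C_add]
  congr 2
  push_cast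
  ring

lemma chebS_zero_eq (j : ℕ) : U ℝ (j : ℤ) = chebS 0 j := by
  induction j using Nat.twoStepInduction with
  | zero => simp [chebS]
  | one => simp [chebS, Finset.sum_range_succ]
  | more j h1 h2 =>
    rw [chebS_zero_rec, ← h1, ← h2]
    push_cast
    rw [U_add_two]

lemma chebS_deriv (q j : ℕ) : derivative (chebS q (j + 1)) = C 2 * chebS (q + 1) j := by
  unfold chebS
  rw [Finset.sum_range_succ, Nat.choose_eq_zero_of_lt (by omega : j + 1 - (j + 1) < j + 1)]
  simp only [Nat.cast_zero, mul_zero, map_zero, zero_mul, add_zero]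
  rw [derivative_sum, Finset.mul_sum]
  refine Finset.sum_congr rfl fun s hs => ?_
  have hs' : s ≤ j := by simpa [Nat.lt_succ_iff] using hs
  by_cases h : 2 * s ≤ j
  · have e0 : j + 1 - 2 * s = (j - 2 * s) + 1 := by omega
    rw [derivative_C_mul, derivative_pow, e0, Nat.add_sub_cancel]
    have e1 : derivative (2 * X : ℝ[X]) = C 2 := by
      rw [show (2 : ℝ[X]) = C 2 from rfl]; simp
    rw [e1]
    have key : ((q.factorial : ℝ) * (q + (j + 1) - s).choose q * (j + 1 - s).choose s) * ((j - 2 * s + 1 : ℕ) : ℝ)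
        = (q + 1).factorial * (q + 1 + j - s).choose (q + 1) * (j - s).choose s := by
      obtain ⟨d, rfl⟩ : ∃ d, j = 2 * s + d := ⟨j - 2 * s, by omega⟩
      have a1 : q + (2 * s + d + 1) - s = (s + d + 1) + q := by omega
      have a2 : 2 * s + d + 1 - s = (d + 1) + s := by omega
      have a3 : q + 1 + (2 * s + d) - s = (s + d) + (q + 1) := by omega
      have a4 : 2 * s + d - s = d + s := by omega
      have a5 : 2 * s + d - 2 * s + 1 = d + 1 := by omega
      rw [a1, a2, a3, a4, a5]
      have b1 := Nat.add_choose_mul_factorial_mul_factorial (s + d + 1) q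
      have b2 := Nat.add_choose_mul_factorial_mul_factorial (d + 1) s
      have b3 := Nat.add_choose_mul_factorial_mul_factorial (s + d) (q + 1)
      have b4 := Nat.add_choose_mul_factorial_mul_factorial d s
      have c1 : ((s + d + 1 + q).choose q : ℝ) = (s + d + 1 + q).factorial / ((s + d + 1).factorial * q.factorial) := by
        rw [eq_div_iff (by positivity)]; rw [← mul_assoc]; exact_mod_cast b1
      have c2 : ((d + 1 + s).choose s : ℝ) = (d + 1 + s).factorial / ((d + 1).factorial * s.factorial) := by
        rw [eq_div_iff (by positivity)]; rw [← mul_assoc]; exact_mod_cast b2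
      have c3 : ((s + d + (q + 1)).choose (q + 1) : ℝ) = (s + d + (q + 1)).factorial / ((s + d).factorial * (q + 1).factorial) := by
        rw [eq_div_iff (by positivity)]; rw [← mul_assoc]; exact_mod_cast b3
      have c4 : ((d + s).choose s : ℝ) = (d + s).factorial / (d.factorial * s.factorial) := by
        rw [eq_div_iff (by positivity)]; rw [← mul_assoc]; exact_mod_cast b4
      rw [c1, c2, c3, c4]
      have d1 : s + d + (q + 1) = s + d + 1 + q := by ring
      have d2 : d + 1 + s = s + d + 1 := by ring
      have d3 : d + s = s + d := by ring
      rw [d1, d2, d3, Nat.factorial_succ d]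
      push_cast
      field_simp
    rw [← key]
    simp only [map_mul, map_natCast]
    ring
  · rw [Nat.choose_eq_zero_of_lt (by omega : j - s < s)]
    by_cases h' : 2 * s ≤ j + 1
    · have : j + 1 - 2 * s = 0 := by omega
      rw [this]
      simp
    · rw [Nat.choose_eq_zero_of_lt (by omega : j + 1 - s < s)]
      simp

lemma chebS_iter (q j : ℕ) : derivative^[q] (U ℝ ((j + q : ℕ) : ℤ)) = C (2 ^ q) * chebS q j := by
  induction q generalizing j with
  | zero => simp [chebS_zero_eq]
  | succ q ih =>
    rw [Function.iterate_succ_apply']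
    have := ih (j + 1)
    rw [show j + (q + 1) = j + 1 + q by ring, this, derivative_C_mul, chebS_deriv, ← mul_assoc, ← Polynomial.C_mul, pow_succ]

lemma cheb_main (q j : ℕ) (x : ℝ) :
    (derivative^[q + 1] (T ℝ ((j + q + 1 : ℕ) : ℤ))).eval x =
     (j + q + 1) * 2 ^ q * ∑ s ∈ Finset.range (j / 2 + 1), (-1 : ℝ) ^ s * ((q + j - s).factorial /
       (s.factorial * (j - 2 * s).factorial)) * (2 * x) ^ (j - 2 * s) := by
  rw [Function.iterate_succ_apply, T_derivative_eq_U]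
  have e : ((j + q + 1 : ℕ) : ℤ) - 1 = ((j + q : ℕ) : ℤ) := by push_cast; ring
  have e' : (((j + q + 1 : ℕ) : ℤ) : ℝ[X]) = C ((j : ℝ) + q + 1) := by push_cast; simp
  rw [e, e', iterate_derivative_C_mul, chebS_iter, eval_mul, eval_mul, eval_C, eval_C, ← mul_assoc]
  congr 1
  rw [chebS, eval_finsetSum]
  have : Finset.range (j / 2 + 1) ⊆ Finset.range (j + 1) := by
    intro a; simp only [Finset.mem_range]; omega
  rw [← Finset.sum_subset this]
  · refine Finset.sum_congr rfl fun s hs => ?_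
    have hs' : 2 * s ≤ j := by simp only [Finset.mem_range] at hs; omega
    simp only [eval_mul, eval_C, eval_pow, eval_X]
    have e2 : eval x (2 : ℝ[X]) = 2 := by
      rw [show (2 : ℝ[X]) = C 2 from rfl, eval_C]
    rw [e2]
    congr 2
    obtain ⟨d, rfl⟩ : ∃ d, j = 2 * s + d := ⟨j - 2 * s, by omega⟩
    have a1 : q + (2 * s + d) - s = (s + d) + q := by omega
    have a4 : 2 * s + d - s = d + s := by omega
    have a5 : 2 * s + d - 2 * s = d := by omega
    rw [a1, a4, a5]
    have b1 := Nat.add_choose_mul_factorial_mul_factorial (s + d) q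
    have b4 := Nat.add_choose_mul_factorial_mul_factorial d s
    have c1 : ((s + d + q).choose q : ℝ) = (s + d + q).factorial / ((s + d).factorial * q.factorial) := by
      rw [eq_div_iff (by positivity)]; rw [← mul_assoc]; exact_mod_cast b1
    have c4 : ((d + s).choose s : ℝ) = (d + s).factorial / (d.factorial * s.factorial) := by
      rw [eq_div_iff (by positivity)]; rw [← mul_assoc]; exact_mod_cast b4
    rw [c1, c4]
    have d3 : d + s = s + d := by ring
    rw [d3]
    field_simp
  · intro s hs hs'
    simp only [Finset.mem_range] at hs hs'
    rw [Nat.choose_eq_zero_of_lt (by omega : j - s < s)]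
    simp

end Cheb


section Gauss

lemma gauss_int0 (t : ℝ) (ht : 0 < t) (a : ℝ) :
    Integrable (fun y : ℝ => rexp (a * y) * rexp (-y ^ 2 / (4 * t))) ∧
    ∫ y : ℝ, rexp (a * y) * rexp (-y ^ 2 / (4 * t)) = rexp (a ^ 2 * t) * √(4 * π * t) := by
  have hb : 0 < 1 / (4 * t) := by positivity
  have h0 := integrable_exp_neg_mul_sq hb
  have e : (fun y : ℝ => rexp (a * y) * rexp (-y ^ 2 / (4 * t))) =
      fun y => rexp (a ^ 2 * t) * rexp (-(1 / (4 * t)) * (y - 2 * t * a) ^ 2) := by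
    ext y
    rw [← Real.exp_add, ← Real.exp_add]
    congr 1
    field_simp
    ring
  rw [e]
  refine ⟨(h0.comp_sub_right (2 * t * a)).const_mul _, ?_⟩
  rw [integral_const_mul, integral_sub_right_eq_self (fun y => rexp (-(1 / (4 * t)) * y ^ 2)), integral_gaussian]
  congr 2
  field_simp

lemma gauss_int1 (t : ℝ) (ht : 0 < t) (a : ℝ) :
    Integrable (fun y : ℝ => y * rexp (a * y) * rexp (-y ^ 2 / (4 * t))) ∧
    ∫ y : ℝ, y * rexp (a * y) * rexp (-y ^ 2 / (4 * t)) = 2 * t * a * rexp (a ^ 2 * t) * √(4 * π * t) := by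
  have hb : 0 < 1 / (4 * t) := by positivity
  have h0 := integrable_exp_neg_mul_sq hb
  have h1 := integrable_mul_exp_neg_mul_sq hb
  have e : (fun y : ℝ => y * rexp (a * y) * rexp (-y ^ 2 / (4 * t))) =
      fun y => rexp (a ^ 2 * t) * ((y - 2 * t * a) * rexp (-(1 / (4 * t)) * (y - 2 * t * a) ^ 2)
        + (2 * t * a) * rexp (-(1 / (4 * t)) * (y - 2 * t * a) ^ 2)) := by
    ext y
    rw [← add_mul, mul_assoc, sub_add_cancel, mul_left_comm (rexp (a ^ 2 * t)), ← Real.exp_add, ← Real.exp_add]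
    congr 2
    field_simp
    ring
  have i1 := (h1.comp_sub_right (2 * t * a))
  have i2 := (h0.comp_sub_right (2 * t * a)).const_mul (2 * t * a)
  have hodd : ∫ y : ℝ, y * rexp (-(1 / (4 * t)) * y ^ 2) = 0 := by
    have := integral_neg_eq_self (fun y : ℝ => y * rexp (-(1 / (4 * t)) * y ^ 2)) volume
    simp only [neg_sq, neg_mul] at this
    rw [integral_neg] at this
    simp only [neg_mul]
    linarith
  rw [e]
  refine ⟨(i1.add i2).const_mul _, ?_⟩
  rw [integral_const_mul, integral_add i1 i2, integral_const_mul,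
    integral_sub_right_eq_self (fun y => rexp (-(1 / (4 * t)) * y ^ 2)),
    integral_sub_right_eq_self (fun y => y * rexp (-(1 / (4 * t)) * y ^ 2)), integral_gaussian, hodd]
  rw [show π / (1 / (4 * t)) = 4 * π * t by field_simp]
  ring

lemma sinh_cosh_expand (l : ℕ) (y : ℝ) :
    ((l : ℝ) + 1) * (2 * Real.sinh y) * (2 * Real.cosh y) ^ l =
    ∑ i ∈ Finset.range (l + 2), ((l + 1).choose i : ℝ) * ((l : ℝ) + 1 - 2 * i) *
      rexp (((l : ℝ) + 1 - 2 * i) * y) := by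
  have h1 : HasDerivAt (fun y : ℝ => (2 * Real.cosh y) ^ (l + 1))
      (((l + 1 : ℕ) : ℝ) * (2 * Real.cosh y) ^ l * (2 * Real.sinh y)) y := by
    have := ((Real.hasDerivAt_cosh y).const_mul 2).fun_pow (l + 1)
    simpa using this
  have e : (fun y : ℝ => (2 * Real.cosh y) ^ (l + 1)) = fun y => ∑ i ∈ Finset.range (l + 2),
      ((l + 1).choose i : ℝ) * rexp (((l : ℝ) + 1 - 2 * i) * y) := by
    ext y
    rw [Real.cosh_eq, mul_div_cancel₀ _ (two_ne_zero), add_comm (rexp y), add_pow]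
    refine Finset.sum_congr rfl fun i hi => ?_
    have hi' : i ≤ l + 1 := by simpa [Nat.lt_succ_iff] using hi
    rw [← Real.exp_nat_mul, ← Real.exp_nat_mul, ← Real.exp_add, mul_comm]
    congr 2
    push_cast [Nat.cast_sub hi']
    ring
  have h2 : HasDerivAt (fun y : ℝ => ∑ i ∈ Finset.range (l + 2),
      ((l + 1).choose i : ℝ) * rexp (((l : ℝ) + 1 - 2 * i) * y))
      (∑ i ∈ Finset.range (l + 2), ((l + 1).choose i : ℝ) * (rexp (((l : ℝ) + 1 - 2 * i) * y) *
      ((l : ℝ) + 1 - 2 * i))) y := by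
    apply HasDerivAt.fun_sum
    intro i _
    apply HasDerivAt.const_mul
    apply HasDerivAt.exp
    simpa using (hasDerivAt_id y).const_mul ((l : ℝ) + 1 - 2 * i)
  rw [e] at h1
  have := h1.unique h2
  push_cast at this
  rw [show ((l : ℝ) + 1) * (2 * Real.sinh y) * (2 * Real.cosh y) ^ l = ((l : ℝ) + 1) * (2 * Real.cosh y) ^ l * (2 * Real.sinh y) by ring, this]
  exact Finset.sum_congr rfl fun i _ => by ring

lemma gauss_sinh (t : ℝ) (ht : 0 < t) (l : ℕ) :
    Integrable (fun y : ℝ => y * Real.sinh y * (2 * Real.cosh y) ^ l * rexp (-y ^ 2 / (4 * t))) ∧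
    ∫ y : ℝ, y * Real.sinh y * (2 * Real.cosh y) ^ l * rexp (-y ^ 2 / (4 * t)) =
      t * √(4 * π * t) / (l + 1) * ∑ i ∈ Finset.range (l + 2), ((l + 1).choose i : ℝ) *
        ((l : ℝ) + 1 - 2 * i) ^ 2 * rexp (((l : ℝ) + 1 - 2 * i) ^ 2 * t) := by
  have e : (fun y : ℝ => y * Real.sinh y * (2 * Real.cosh y) ^ l * rexp (-y ^ 2 / (4 * t))) =
      fun y => ∑ i ∈ Finset.range (l + 2), (((l + 1).choose i : ℝ) * ((l : ℝ) + 1 - 2 * i) / (2 * (l + 1))) *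
        (y * rexp (((l : ℝ) + 1 - 2 * i) * y) * rexp (-y ^ 2 / (4 * t))) := by
    ext y
    have := sinh_cosh_expand l y
    have h' : Real.sinh y * (2 * Real.cosh y) ^ l = (∑ i ∈ Finset.range (l + 2), ((l + 1).choose i : ℝ) * ((l : ℝ) + 1 - 2 * i) *
      rexp (((l : ℝ) + 1 - 2 * i) * y)) / (2 * (l + 1)) := by
      rw [← this]; field_simp
    rw [mul_assoc y, h', Finset.sum_div, Finset.mul_sum, Finset.sum_mul]
    exact Finset.sum_congr rfl fun i _ => by ring
  rw [e]
  have hi : ∀ i ∈ Finset.range (l + 2), Integrable (fun y : ℝ => (((l + 1).choose i : ℝ) * ((l : ℝ) + 1 - 2 * i) / (2 * (l + 1))) *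
        (y * rexp (((l : ℝ) + 1 - 2 * i) * y) * rexp (-y ^ 2 / (4 * t)))) :=
    fun i _ => (gauss_int1 t ht _).1.const_mul _
  refine ⟨integrable_finsetSum _ hi, ?_⟩
  rw [integral_finsetSum _ hi, Finset.mul_sum]
  refine Finset.sum_congr rfl fun i _ => ?_
  rw [integral_const_mul, (gauss_int1 t ht _).2]
  field_simp

lemma sym_sum (l : ℕ) (f : ℝ → ℝ) (hf : ∀ a, f (-a) = f a) (h0 : f 0 = 0) :
    ∑ i ∈ Finset.range (l + 2), ((l + 1).choose i : ℝ) * f ((l : ℝ) + 1 - 2 * i) =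
    2 * ∑ i ∈ Finset.range (l / 2 + 1), ((l + 1).choose i : ℝ) * f ((l : ℝ) + 1 - 2 * i) := by
  set g : ℕ → ℝ := fun i => ((l + 1).choose i : ℝ) * f ((l : ℝ) + 1 - 2 * i) with hg
  have hrefl : ∀ i ≤ l + 1, g (l + 1 - i) = g i := by
    intro i hi
    simp only [hg]
    rw [Nat.choose_symm hi]
    congr 1
    rw [← hf]
    congr 1
    push_cast [Nat.cast_sub hi]; ring
  have h2 : ∑ i ∈ Finset.Ico (l / 2 + 1) (l + 2), g i = ∑ i ∈ Finset.range (l / 2 + 1), g i := by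
    have : ∑ i ∈ Finset.Ico (l + 2 - (l / 2 + 1)) (l + 2), g i = ∑ i ∈ Finset.range (l / 2 + 1), g i := by
      have h3 := Finset.sum_Ico_reflect g 0 (m := l / 2 + 1) (n := l + 1) (by omega)
      simp only [Nat.sub_zero, Nat.Ico_zero_eq_range] at h3
      rw [show l + 1 + 1 = l + 2 by ring] at h3
      rw [← h3]
      refine Finset.sum_congr rfl fun i hi => hrefl i ?_
      simp only [Finset.mem_range] at hi
      omega
    rw [← this]
    rcases Nat.even_or_odd' l with ⟨d, hd | hd⟩
    · congr 2; omega
    · rw [Finset.sum_eq_sum_Ico_succ_bot (by omega)]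
      have : g (l / 2 + 1) = 0 := by
        simp only [hg]
        have e : ((l : ℝ) + 1 - 2 * ((l / 2 + 1 : ℕ) : ℝ)) = 0 := by
          have : l / 2 + 1 = d + 1 := by omega
          rw [this, hd]; push_cast; ring
        rw [e, h0, mul_zero]
      rw [this, zero_add]
      congr 2; omega
  have := Finset.sum_range_add_sum_Ico g (m := l / 2 + 1) (n := l + 2) (by omega)
  rw [← this, h2]; ring

end Gauss


section Fiber
open Polynomial Polynomial.Chebyshev

lemma choose_aux (q m s i : ℕ) :
    ((s + i + m + 1 + q).choose q : ℝ) * q.factorial * ((m + 1 + (s + i)).choose s : ℝ) *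
      ((q + (m + 1) + 2 * (s + i) - s).choose i : ℝ) =
    (q + 1 + m + 2 * (s + i) - s).factorial / (s.factorial * i.factorial * (m + 1 + i).factorial) := by
  have a1 : m + 1 + (s + i) = (m + 1 + i) + s := by ring
  have a2 : q + (m + 1) + 2 * (s + i) - s = (s + i + m + 1 + q) + i := by omega
  have a3 : q + 1 + m + 2 * (s + i) - s = (s + i + m + 1 + q) + i := by omega
  have b1 := Nat.add_choose_mul_factorial_mul_factorial (s + i + m + 1) q
  have b2 := Nat.add_choose_mul_factorial_mul_factorial (m + 1 + i) s
  have b3 := Nat.add_choose_mul_factorial_mul_factorial (s + i + m + 1 + q) i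
  have c1 : ((s + i + m + 1 + q).choose q : ℝ) = (s + i + m + 1 + q).factorial / ((s + i + m + 1).factorial * q.factorial) := by
    rw [eq_div_iff (by positivity)]; rw [← mul_assoc]; exact_mod_cast b1
  have c2 : ((m + 1 + i + s).choose s : ℝ) = (m + 1 + i + s).factorial / ((m + 1 + i).factorial * s.factorial) := by
    rw [eq_div_iff (by positivity)]; rw [← mul_assoc]; exact_mod_cast b2
  have c3 : ((s + i + m + 1 + q + i).choose i : ℝ) = (s + i + m + 1 + q + i).factorial / ((s + i + m + 1 + q).factorial * i.factorial) := by
    rw [eq_div_iff (by positivity)]; rw [← mul_assoc]; exact_mod_cast b3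
  rw [a1, a2, a3, c1, c2, c3]
  rw [show m + 1 + i + s = s + i + m + 1 by ring]
  field_simp

lemma pTerm_eq (n : ℕ) (hn : 1 ≤ n) (J : ℕ → ℕ → ℕ → ℝ → ℝ) (hJ : IsJacobi J)
    (r : ℝ) (hr : r ∈ Set.Ioo 0 (π / 2)) (t : ℝ) (m k : ℕ) :
    pTerm n J t r 0 (m, k) = rexp ((4 * n ^ 2 + 4 * n) * t) *
      rexp (-(2 * (k : ℝ) + m + 2 * n + 1) ^ 2 * t) * (1 / (2 * π ^ (2 * n + 2))) *
      (2 * (k : ℝ) + m + 2 * n + 1) *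
      ∑ s ∈ Finset.range (k + 1), (-1 : ℝ) ^ s * Real.cos r ^ (m + 2 * (k - s)) *
        (((m : ℝ) + 1) ^ 2 * rexp (((m : ℝ) + 1) ^ 2 * t)) *
        ((2 * n + m + 2 * k - s).factorial / (s.factorial * (k - s).factorial *
          (m + 1 + (k - s)).factorial)) := by
  have hx : Real.cos (2 * r) ∈ Set.Ioo (-1 : ℝ) 1 := by
    have hs : 0 < Real.sin r := Real.sin_pos_of_pos_of_lt_pi hr.1 (by linarith [hr.2, Real.pi_pos])
    have hc : 0 < Real.cos r := Real.cos_pos_of_mem_Ioo ⟨by linarith [hr.1, Real.pi_pos], hr.2⟩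
    have := Real.sin_sq_add_cos_sq r
    rw [Real.cos_two_mul]
    constructor <;> nlinarith
  obtain ⟨q, hq⟩ : ∃ q, 2 * n = q + 1 := ⟨2 * n - 1, by omega⟩
  have hqr : (2 * (n : ℝ)) = q + 1 := by exact_mod_cast hq
  have hc2 : (1 + Real.cos (2 * r)) / 2 = Real.cos r ^ 2 := by rw [Real.cos_two_mul]; ring
  unfold pTerm vertFactor
  simp only [if_true]
  rw [(hJ _ _ _).2 _ hx, aux_jac _ _ _ _ hx, hc2]
  have hG : Real.Gamma (2 * (n : ℝ)) = q.factorial := by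
    rw [hqr, Real.Gamma_nat_eq_factorial]
  rw [hG]
  have hexp : rexp (-(4 * ((k : ℝ) * (k + 2 * n + m + 1) + n * m)) * t) =
      rexp ((4 * n ^ 2 + 4 * n) * t) * rexp (-(2 * (k : ℝ) + m + 2 * n + 1) ^ 2 * t) *
        rexp (((m : ℝ) + 1) ^ 2 * t) := by
    rw [← Real.exp_add, ← Real.exp_add]; congr 1; ring
  rw [hexp, Finset.mul_sum, Finset.mul_sum]
  refine Finset.sum_congr rfl fun s hs => ?_
  obtain ⟨i, rfl⟩ : ∃ i, k = s + i := ⟨k - s, by simp only [Finset.mem_range] at hs; omega⟩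
  rw [Nat.add_sub_cancel_left]
  have := choose_aux q m s i
  rw [show s + i + m + 2 * n = s + i + m + 1 + q by omega, show 2 * n - 1 = q by omega,
    show 2 * n + m + 2 * (s + i) - s = q + 1 + m + 2 * (s + i) - s by omega, ← this]
  rw [pow_add (Real.cos r), pow_mul (Real.cos r)]
  field_simp

lemma fiber_sum (n : ℕ) (hn : 1 ≤ n) (J : ℕ → ℕ → ℕ → ℝ → ℝ) (hJ : IsJacobi J)
    (r : ℝ) (hr : r ∈ Set.Ioo 0 (π / 2)) (t : ℝ) (ht : 0 < t) (j : ℕ) :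
    ∑ k ∈ Finset.range (j / 2 + 1), pTerm n J t r 0 (j - 2 * k, k) =
    (rexp ((4 * n ^ 2 + 4 * n) * t) / (2 * π ^ (2 * n + 2)) / 2 ^ (2 * n) / (2 * t) / √(4 * π * t)) *
      ∫ y : ℝ, y * Real.sinh y * rexp (-y ^ 2 / (4 * t)) *
        (rexp (-((j + 2 * n + 1 : ℕ) : ℝ) ^ 2 * t) *
        (derivative^[2 * n + 1] (T ℝ ((j + 2 * n + 1 : ℕ) : ℤ))).eval (Real.cos r * Real.cosh y)) := by
  set F : ℝ → ℝ := fun a => a ^ 2 * rexp (a ^ 2 * t) with hF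
  have hL : ∑ k ∈ Finset.range (j / 2 + 1), pTerm n J t r 0 (j - 2 * k, k) =
      rexp ((4 * n ^ 2 + 4 * n) * t) * rexp (-((j + 2 * n + 1 : ℕ) : ℝ) ^ 2 * t) * (1 / (2 * π ^ (2 * n + 2))) *
      ((j + 2 * n + 1 : ℕ) : ℝ) * ∑ s ∈ Finset.range (j / 2 + 1), (-1 : ℝ) ^ s * Real.cos r ^ (j - 2 * s) *
        ((2 * n + j - s).factorial / (s.factorial * (j - 2 * s + 1).factorial)) *
        ∑ i ∈ Finset.range ((j - 2 * s) / 2 + 1), ((j - 2 * s + 1).choose i : ℝ) *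
          F (((j - 2 * s : ℕ) : ℝ) + 1 - 2 * i) := by
    have h1 : ∀ k ∈ Finset.range (j / 2 + 1), pTerm n J t r 0 (j - 2 * k, k) =
        ∑ s ∈ Finset.range (k + 1), rexp ((4 * n ^ 2 + 4 * n) * t) * rexp (-((j + 2 * n + 1 : ℕ) : ℝ) ^ 2 * t) * (1 / (2 * π ^ (2 * n + 2))) *
      ((j + 2 * n + 1 : ℕ) : ℝ) * ((-1 : ℝ) ^ s * Real.cos r ^ (j - 2 * s) *
        ((2 * n + j - s).factorial / (s.factorial * (j - 2 * s + 1).factorial)) *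
        (((j - 2 * s + 1).choose (k - s) : ℝ) *
          F (((j - 2 * s : ℕ) : ℝ) + 1 - 2 * ((k - s : ℕ) : ℝ)))) := by
      intro k hk
      have hk' : 2 * k ≤ j := by simp only [Finset.mem_range] at hk; omega
      rw [pTerm_eq n hn J hJ r hr, Finset.mul_sum]
      refine Finset.sum_congr rfl fun s hs => ?_
      have hs' : s ≤ k := by simpa [Nat.lt_succ_iff] using hs
      have e1 : (2 * (k : ℝ) + ((j - 2 * k : ℕ) : ℝ) + 2 * n + 1) = ((j + 2 * n + 1 : ℕ) : ℝ) := by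
        push_cast [Nat.cast_sub hk']; ring
      rw [e1, show j - 2 * k + 2 * (k - s) = j - 2 * s by omega,
        show 2 * n + (j - 2 * k) + 2 * k - s = 2 * n + j - s by omega]
      have e2 : (((j - 2 * s : ℕ) : ℝ) + 1 - 2 * ((k - s : ℕ) : ℝ)) = ((j - 2 * k : ℕ) : ℝ) + 1 := by
        rw [Nat.cast_sub hk', Nat.cast_sub (by omega : 2 * s ≤ j), Nat.cast_sub hs']; push_cast; ring
      rw [e2]
      have b1 := Nat.add_choose_mul_factorial_mul_factorial (j - 2 * k + 1 + (k - s)) (k - s)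
      rw [show j - 2 * k + 1 + (k - s) + (k - s) = j - 2 * s + 1 by omega] at b1
      have c1 : ((j - 2 * s + 1).choose (k - s) : ℝ) = (j - 2 * s + 1).factorial / ((j - 2 * k + 1 + (k - s)).factorial * (k - s).factorial) := by
        rw [eq_div_iff (by positivity)]; rw [← mul_assoc]; exact_mod_cast b1
      rw [c1]
      simp only [hF]
      field_simp
    rw [Finset.sum_congr rfl h1]
    rw [Finset.sum_comm' (t' := Finset.range (j / 2 + 1)) (s' := fun s => Finset.Ico s (j / 2 + 1))
      (by intro x y; simp only [Finset.mem_range, Finset.mem_Ico]; omega)]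
    rw [Finset.mul_sum]
    refine Finset.sum_congr rfl fun s hs => ?_
    have hs' : s ≤ j / 2 := by simpa [Nat.lt_succ_iff] using hs
    rw [Finset.mul_sum, Finset.mul_sum, Finset.sum_Ico_eq_sum_range, show j / 2 + 1 - s = (j - 2 * s) / 2 + 1 by omega]
    refine Finset.sum_congr rfl fun i hi => ?_
    rw [Nat.add_sub_cancel_left]
  rw [hL]
  have hI : ∀ s ∈ Finset.range (j / 2 + 1), Integrable (fun y : ℝ =>
     ((-1 : ℝ) ^ s * Real.cos r ^ (j - 2 * s) * ((2 * n + j - s).factorial /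
       (s.factorial * (j - 2 * s).factorial))) *
       (y * Real.sinh y * (2 * Real.cosh y) ^ (j - 2 * s) * rexp (-y ^ 2 / (4 * t)))) :=
    fun s _ => (gauss_sinh t ht _).1.const_mul _
  have hR : (fun y : ℝ => y * Real.sinh y * rexp (-y ^ 2 / (4 * t)) *
        (rexp (-((j + 2 * n + 1 : ℕ) : ℝ) ^ 2 * t) *
        (derivative^[2 * n + 1] (T ℝ ((j + 2 * n + 1 : ℕ) : ℤ))).eval (Real.cos r * Real.cosh y))) =
      fun y => (rexp (-((j + 2 * n + 1 : ℕ) : ℝ) ^ 2 * t) * ((j + 2 * n + 1 : ℕ) : ℝ) * 2 ^ (2 * n)) *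
        ∑ s ∈ Finset.range (j / 2 + 1), ((-1 : ℝ) ^ s * Real.cos r ^ (j - 2 * s) * ((2 * n + j - s).factorial /
       (s.factorial * (j - 2 * s).factorial))) *
       (y * Real.sinh y * (2 * Real.cosh y) ^ (j - 2 * s) * rexp (-y ^ 2 / (4 * t))) := by
    ext y
    rw [cheb_main (2 * n) j, Finset.mul_sum, Finset.mul_sum, Finset.mul_sum, Finset.mul_sum]
    refine Finset.sum_congr rfl fun s hs => ?_
    rw [show 2 * (Real.cos r * Real.cosh y) = Real.cos r * (2 * Real.cosh y) by ring, mul_pow]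
    push_cast
    ring
  rw [hR, integral_const_mul, integral_finsetSum _ hI, Finset.mul_sum, Finset.mul_sum, Finset.mul_sum]
  refine Finset.sum_congr rfl fun s hs => ?_
  rw [integral_const_mul, (gauss_sinh t ht _).2]
  have hsy := sym_sum (j - 2 * s) F (by intro a; simp [hF]) (by simp [hF])
  have hsy' : ∑ i ∈ Finset.range (j - 2 * s + 2), ((j - 2 * s + 1).choose i : ℝ) *
        (((j - 2 * s : ℕ) : ℝ) + 1 - 2 * i) ^ 2 * rexp ((((j - 2 * s : ℕ) : ℝ) + 1 - 2 * i) ^ 2 * t) =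
      2 * ∑ i ∈ Finset.range ((j - 2 * s) / 2 + 1), ((j - 2 * s + 1).choose i : ℝ) *
          F (((j - 2 * s : ℕ) : ℝ) + 1 - 2 * i) := by
    rw [← hsy]
    exact Finset.sum_congr rfl fun i _ => by simp only [hF]; ring
  rw [hsy', Nat.factorial_succ]
  have hpos : √(4 * π * t) ≠ 0 := by positivity
  push_cast
  field_simp

end Fiber


lemma chord_aux1 (a : ℝ) (h0 : 0 ≤ a) (h1 : a < π/2) : 0 ≤ a * Real.tan a + 2 * Real.log (Real.cos a) := by
  have hc : ∀ x ∈ Set.Icc 0 a, 0 < Real.cos x := fun x hx =>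
    Real.cos_pos_of_mem_Ioo ⟨by linarith [hx.1, Real.pi_pos], by linarith [hx.2]⟩
  have hd : ∀ x ∈ Set.Icc 0 a, HasDerivAt (fun x => x * Real.tan x + 2 * Real.log (Real.cos x))
      (1 * Real.tan x + x * (1 / Real.cos x ^ 2) + 2 * ((- Real.sin x) / Real.cos x)) x := fun x hx =>
    ((hasDerivAt_id x).mul (Real.hasDerivAt_tan (hc x hx).ne')).add
      (((Real.hasDerivAt_cos x).log (hc x hx).ne').const_mul 2)
  have hm : MonotoneOn (fun x => x * Real.tan x + 2 * Real.log (Real.cos x)) (Set.Icc 0 a) := by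
    apply monotoneOn_of_deriv_nonneg (convex_Icc 0 a)
    · exact fun x hx => (hd x hx).continuousAt.continuousWithinAt
    · intro x hx
      rw [interior_Icc] at hx
      exact (hd x ⟨hx.1.le, hx.2.le⟩).differentiableAt.differentiableWithinAt
    · intro x hx
      rw [interior_Icc] at hx
      have hx' : x ∈ Set.Icc 0 a := ⟨hx.1.le, hx.2.le⟩
      rw [(hd x hx').deriv, Real.tan_eq_sin_div_cos]
      have hcx := hc x hx'
      have : 1 * (Real.sin x / Real.cos x) + x * (1 / Real.cos x ^ 2) + 2 * (- Real.sin x / Real.cos x)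
         = (x - Real.sin x * Real.cos x) / Real.cos x ^ 2 := by field_simp; ring
      rw [this]
      apply div_nonneg _ (by positivity)
      have h2 : Real.sin x ≤ x := Real.sin_le hx.1.le
      have h3 : Real.cos x ≤ 1 := Real.cos_le_one x
      have h4 : 0 ≤ Real.sin x := Real.sin_nonneg_of_nonneg_of_le_pi hx.1.le (by linarith [hx.2, Real.pi_pos])
      nlinarith
  have := hm (Set.left_mem_Icc.2 h0) (Set.right_mem_Icc.2 h0) h0
  simpa using this

lemma chord_aux2 (r a : ℝ) (h0 : 0 < a) (har : a ≤ r) (h1 : r < π/2) :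
    a^2 * Real.log (Real.cos r) ≤ r^2 * Real.log (Real.cos a) := by
  have hc : ∀ x ∈ Set.Icc a r, 0 < Real.cos x := fun x hx =>
    Real.cos_pos_of_mem_Ioo ⟨by linarith [hx.1, Real.pi_pos], by linarith [hx.2]⟩
  have hd : ∀ x ∈ Set.Icc a r, HasDerivAt (fun x => Real.log (Real.cos x) / x^2)
      (((- Real.sin x) / Real.cos x * x^2 - Real.log (Real.cos x) * (2 * x)) / (x^2)^2) x := fun x hx => by
    have := ((Real.hasDerivAt_cos x).log (hc x hx).ne').fun_div (hasDerivAt_pow 2 x) (pow_ne_zero 2 (by linarith [hx.1]))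
    simpa using this
  have hm : AntitoneOn (fun x => Real.log (Real.cos x) / x^2) (Set.Icc a r) := by
    apply antitoneOn_of_deriv_nonpos (convex_Icc a r)
    · exact fun x hx => (hd x hx).continuousAt.continuousWithinAt
    · intro x hx
      rw [interior_Icc] at hx
      exact (hd x ⟨hx.1.le, hx.2.le⟩).differentiableAt.differentiableWithinAt
    · intro x hx
      rw [interior_Icc] at hx
      have hx' : x ∈ Set.Icc a r := ⟨hx.1.le, hx.2.le⟩
      rw [(hd x hx').deriv]
      have h5 := chord_aux1 x (by linarith [hx.1]) (by linarith [hx.2])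
      rw [Real.tan_eq_sin_div_cos] at h5
      apply div_nonpos_of_nonpos_of_nonneg _ (by positivity)
      have hx0 : 0 < x := by linarith [hx.1]
      have : - Real.sin x / Real.cos x * x^2 - Real.log (Real.cos x) * (2 * x) =
        - (x * (x * (Real.sin x / Real.cos x) + 2 * Real.log (Real.cos x))) := by ring
      rw [this]
      exact neg_nonpos.2 (mul_nonneg hx0.le h5)
  have := hm (Set.left_mem_Icc.2 har) (Set.right_mem_Icc.2 har) har
  simp only at this
  rw [div_le_div_iff₀ (by nlinarith) (by positivity)] at this
  nlinarith

lemma logcos_lt (r : ℝ) (h0 : 0 < r) (h1 : r < π/2) : r^2/2 < - Real.log (Real.cos r) := by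
  have hc : ∀ x ∈ Set.Icc 0 r, 0 < Real.cos x := fun x hx =>
    Real.cos_pos_of_mem_Ioo ⟨by linarith [hx.1, Real.pi_pos], by linarith [hx.2]⟩
  have hd : ∀ x ∈ Set.Icc 0 r, HasDerivAt (fun x => Real.log (Real.cos x) + x^2/2)
      ((- Real.sin x) / Real.cos x + x) x := fun x hx => by
    have := ((Real.hasDerivAt_cos x).log (hc x hx).ne').fun_add ((hasDerivAt_pow 2 x).div_const 2)
    simpa using this
  have hm : StrictAntiOn (fun x => Real.log (Real.cos x) + x^2/2) (Set.Icc 0 r) := by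
    apply strictAntiOn_of_deriv_neg (convex_Icc 0 r)
    · exact fun x hx => (hd x hx).continuousAt.continuousWithinAt
    · intro x hx
      rw [interior_Icc] at hx
      have hx' : x ∈ Set.Icc 0 r := ⟨hx.1.le, hx.2.le⟩
      rw [(hd x hx').deriv]
      have := Real.lt_tan hx.1 (by linarith [hx.2])
      rw [Real.tan_eq_sin_div_cos] at this
      rw [neg_div]; linarith
  have := hm (Set.left_mem_Icc.2 h0.le) (Set.right_mem_Icc.2 h0.le) h0
  simp at this
  linarith

lemma sinh_le_mul_cosh (x : ℝ) (hx : 0 ≤ x) : Real.sinh x ≤ x * Real.cosh x := by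
  have hd : ∀ x, HasDerivAt (fun x => x * Real.cosh x - Real.sinh x)
      (1 * Real.cosh x + x * Real.sinh x - Real.cosh x) x := fun x => 
    ((hasDerivAt_id x).mul (Real.hasDerivAt_cosh x)).sub (Real.hasDerivAt_sinh x)
  have hm : MonotoneOn (fun x => x * Real.cosh x - Real.sinh x) (Set.Ici 0) := by
    apply monotoneOn_of_deriv_nonneg (convex_Ici 0)
    · exact fun x hx => (hd x).continuousAt.continuousWithinAt
    · exact fun x hx => (hd x).differentiableAt.differentiableWithinAt
    · intro x hx
      rw [interior_Ici] at hx
      rw [(hd x).deriv]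
      have hx0 : 0 < x := hx
      have := mul_nonneg hx0.le (Real.sinh_nonneg_iff.2 hx0.le)
      linarith
  have := hm (Set.self_mem_Ici) (Set.mem_Ici.2 hx) hx
  simp at this
  linarith

lemma logcosh_sq (b y : ℝ) (hb : 0 ≤ b) (hby : b ≤ y) :
    2 * (Real.log (Real.cosh y) - Real.log (Real.cosh b)) ≤ y^2 - b^2 := by
  have hd : ∀ x, HasDerivAt (fun x => x^2/2 - Real.log (Real.cosh x))
      (x - Real.sinh x / Real.cosh x) x := fun x => by
    have := ((hasDerivAt_pow 2 x).div_const 2).fun_sub ((Real.hasDerivAt_cosh x).log (Real.cosh_pos x).ne')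
    simpa using this
  have hm : MonotoneOn (fun x => x^2/2 - Real.log (Real.cosh x)) (Set.Ici 0) := by
    apply monotoneOn_of_deriv_nonneg (convex_Ici 0)
    · exact fun x hx => (hd x).continuousAt.continuousWithinAt
    · exact fun x hx => (hd x).differentiableAt.differentiableWithinAt
    · intro x hx
      rw [interior_Ici] at hx
      rw [(hd x).deriv, sub_nonneg, div_le_iff₀ (Real.cosh_pos x)]
      exact sinh_le_mul_cosh x (le_of_lt hx)
  have := hm (Set.mem_Ici.2 hb) (Set.mem_Ici.2 (hb.trans hby)) hby
  simp at this
  linarith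

lemma logcosh_lin (b y : ℝ) (hby : b ≤ y) :
    Real.log (Real.cosh y) - Real.log (Real.cosh b) ≤ y - b := by
  have : Real.cosh y ≤ Real.exp (y - b) * Real.cosh b := by
    rw [Real.cosh_eq, Real.cosh_eq, mul_div_assoc', mul_add, ← Real.exp_add, ← Real.exp_add]
    have h1 : Real.exp (-y) ≤ Real.exp (y - b + -b) := Real.exp_le_exp.2 (by linarith)
    have h2 : y - b + b = y := by ring
    rw [h2]; linarith
  have h := Real.log_le_log (Real.cosh_pos y) this
  rw [Real.log_mul (Real.exp_pos _).ne' (Real.cosh_pos b).ne', Real.log_exp] at h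
  linarith

lemma norm_cos_sub_one (a b : ℝ) : ‖Complex.cos (a + b * Complex.I) - 1‖ = Real.cosh b - Real.cos a := by
  have h0 : 0 ≤ Real.cosh b - Real.cos a := by linarith [Real.one_le_cosh b, Real.cos_le_one a]
  rw [← Real.sqrt_sq h0, Complex.norm_eq_sqrt_sq_add_sq]
  congr 1
  have e : Complex.cos (a + b * Complex.I) = ((Real.cos a * Real.cosh b : ℝ):ℂ) - ((Real.sin a * Real.sinh b : ℝ) : ℂ) * Complex.I := by
    rw [Complex.cos_add_mul_I]; push_cast; ring
  have h1 := Real.cosh_sq b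
  have h2 := Real.sin_sq_add_cos_sq a
  rw [e]
  generalize Real.cos a = A at *
  generalize Real.sin a = B at *
  generalize Real.cosh b = D at *
  generalize Real.sinh b = E at *
  simp only [Complex.sub_re, Complex.sub_im, Complex.ofReal_re, Complex.ofReal_im, Complex.mul_re, Complex.mul_im, Complex.I_re, Complex.I_im, Complex.one_re, Complex.one_im]
  linear_combination E^2 * h2 + (A^2-1) * h1

lemma norm_cos_add_one (a b : ℝ) : ‖Complex.cos (a + b * Complex.I) + 1‖ = Real.cosh b + Real.cos a := by
  have h0 : 0 ≤ Real.cosh b + Real.cos a := by linarith [Real.one_le_cosh b, Real.neg_one_le_cos a]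
  rw [← Real.sqrt_sq h0, Complex.norm_eq_sqrt_sq_add_sq]
  congr 1
  have e : Complex.cos (a + b * Complex.I) = ((Real.cos a * Real.cosh b : ℝ):ℂ) - ((Real.sin a * Real.sinh b : ℝ) : ℂ) * Complex.I := by
    rw [Complex.cos_add_mul_I]; push_cast; ring
  have h1 := Real.cosh_sq b
  have h2 := Real.sin_sq_add_cos_sq a
  rw [e]
  generalize Real.cos a = A at *
  generalize Real.sin a = B at *
  generalize Real.cosh b = D at *
  generalize Real.sinh b = E at *
  simp only [Complex.sub_re, Complex.sub_im, Complex.add_re, Complex.add_im, Complex.ofReal_re, Complex.ofReal_im, Complex.mul_re, Complex.mul_im, Complex.I_re, Complex.I_im, Complex.one_re, Complex.one_im]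
  linear_combination E^2 * h2 + (A^2-1) * h1

lemma ellipse_bds (a b x t : ℝ) (hx : 0 ≤ x) (h : ‖Complex.cos (a + b * Complex.I) - x‖ ≤ t) :
    Real.cosh b ≤ max x 1 + t ∧ Real.cos a ≤ x + t := by
  have h1 := norm_cos_sub_one a b
  have h2 := norm_cos_add_one a b
  have h3 : ‖Complex.cos (a + b * Complex.I) - 1‖ ≤ t + |x - 1| := by
    calc _ = ‖(Complex.cos (a + b * Complex.I) - x) + ((x - 1 : ℝ):ℂ)‖ := by push_cast; congr 1; ring
      _ ≤ _ := (norm_add_le _ _).trans (by rw [Complex.norm_real, Real.norm_eq_abs]; linarith)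
  have h4 : ‖Complex.cos (a + b * Complex.I) + 1‖ ≤ t + (x + 1) := by
    calc _ = ‖(Complex.cos (a + b * Complex.I) - x) + ((x + 1 : ℝ):ℂ)‖ := by push_cast; congr 1; ring
      _ ≤ _ := (norm_add_le _ _).trans (by rw [Complex.norm_real, Real.norm_eq_abs, abs_of_nonneg (by linarith)]; linarith)
  have h5 : |x - 1| - t ≤ ‖Complex.cos (a + b * Complex.I) - 1‖ := by
    have : ‖((x - 1 : ℝ):ℂ)‖ ≤ ‖Complex.cos (a + b * Complex.I) - x‖ + ‖Complex.cos (a + b * Complex.I) - 1‖ := by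
      calc _ = ‖(Complex.cos (a + b * Complex.I) - 1) - (Complex.cos (a + b * Complex.I) - x)‖ := by push_cast; congr 1; ring
        _ ≤ _ := (norm_sub_le _ _).trans (by linarith)
    rw [Complex.norm_real, Real.norm_eq_abs] at this
    linarith
  constructor
  · rcases le_total x 1 with hx1 | hx1
    · rw [max_eq_right hx1]; rw [abs_of_nonpos (by linarith)] at h3 h5; linarith
    · rw [max_eq_left hx1]; rw [abs_of_nonneg (by linarith)] at h3 h5; linarith
  · rcases le_total x 1 with hx1 | hx1
    · rw [abs_of_nonpos (by linarith)] at h3 h5; linarith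
    · have ht := norm_nonneg (Complex.cos (a + b * Complex.I) - x)
      linarith [Real.cos_le_one a]

lemma cosh_lower (b : ℝ) : 1 + b^2/2 ≤ Real.cosh b := by
  have h1 : Real.cosh b = Real.cosh (b/2)^2 + Real.sinh (b/2)^2 := by
    rw [← Real.cosh_two_mul]; congr 1; ring
  have h2 := Real.cosh_sq (b/2)
  have h3 : (b/2)^2 ≤ Real.sinh (b/2)^2 := by
    rw [← sq_abs (b/2), ← sq_abs (Real.sinh (b/2)), Real.abs_sinh]
    have := Real.self_le_sinh_iff.2 (abs_nonneg (b/2))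
    gcongr
  nlinarith

lemma L9 (r : ℝ) (h0 : 0 < r) (h1 : r < π/2) : ∃ κ M t0 : ℝ, 0 < κ ∧ 0 < M ∧ 0 < t0 ∧ ∀ t, 0 < t → t ≤ t0 →
    ∀ y a b : ℝ, |a| ≤ π/2 → ‖Complex.cos (a + b * Complex.I) - (Real.cos r * Real.cosh y : ℝ)‖ ≤ t →
    r^2 + κ * min (y^2) |y| - M * t ≤ a^2 - b^2 + y^2 := by
  have hc : 0 < Real.cos r := Real.cos_pos_of_mem_Ioo ⟨by linarith [Real.pi_pos], h1⟩
  have hlog := logcos_lt r h0 h1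
  obtain ⟨L, hL⟩ : ∃ L, L = - Real.log (Real.cos r) := ⟨_, rfl⟩
  have hlc : Real.log (Real.cos r) = - L := by linarith
  rw [← hL] at hlog
  set c := Real.cos r with hcdef
  have hL0 : 0 < L := by nlinarith
  -- parameters
  set κ1 := 1 - r^2/(2*L) with hκ1
  have hκ1p : 0 < κ1 := by
    rw [hκ1, sub_pos, div_lt_one (by linarith)]; linarith
  set θ := (2*L - r^2)/(4*L) with hθ
  have hθp : 0 < θ := div_pos (by linarith) (by linarith)
  have hθ1 : θ ≤ 1/2 := by rw [hθ, div_le_iff₀ (by linarith)]; nlinarith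
  have hθL : θ * (4*L) = 2*L - r^2 := by rw [hθ]; field_simp
  refine ⟨min κ1 (θ*L/2), (r^2/(L*c) + 2) + 2/c, L*c/2, lt_min hκ1p (by positivity), by positivity, by positivity, ?_⟩
  intro t ht htt y a b ha hw
  have hcy : 0 < Real.cosh y := Real.cosh_pos y
  have hcy1 := Real.one_le_cosh y
  have hx0 : 0 < c * Real.cosh y := by positivity
  obtain ⟨he1, he2⟩ := ellipse_bds a b (c * Real.cosh y) t hx0.le hw
  have hmin0 : 0 ≤ min (y^2) |y| := le_min (sq_nonneg _) (abs_nonneg _)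
  have hup : ∀ z, 0 < z → z ≤ c * Real.cosh y + t → Real.log z ≤ Real.log (Real.cosh y) - L + t / c := by
    intro z hz hzz
    have : z ≤ c * Real.cosh y * Real.exp (t/c) := by
      refine hzz.trans ?_
      have := Real.add_one_le_exp (t/c)
      have h3 : c * Real.cosh y * (t/c + 1) ≤ c * Real.cosh y * Real.exp (t/c) := by gcongr
      refine le_trans ?_ h3
      have : c * Real.cosh y * (t/c+1) = c * Real.cosh y + t * Real.cosh y := by field_simp; ring
      nlinarith
    have h4 := Real.log_le_log hz this
    rw [Real.log_mul hx0.ne' (Real.exp_pos _).ne', Real.log_mul hc.ne' hcy.ne', Real.log_exp, hlc] at h4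
    linarith
  rcases le_total (c * Real.cosh y) 1 with hx1 | hx1
  · -- x ≤ 1
    rw [max_eq_right hx1] at he1
    have hb : b^2 ≤ 2 * t := by
      have : 1 + b^2/2 ≤ Real.cosh b := cosh_lower b
      linarith
    have ha2 : r^2 - r^2/(2*L)*y^2 - r^2/(L*c)*t ≤ a^2 := by
      rcases le_total r |a| with har | har
      · have : r^2 ≤ a^2 := by rw [← sq_abs a]; gcongr
        have : 0 ≤ r^2/(2*L)*y^2 := by positivity
        have : 0 ≤ r^2/(L*c)*t := by positivity
        linarith
      · have hca : 0 < Real.cos |a| := Real.cos_pos_of_mem_Ioo ⟨by linarith [Real.pi_pos, abs_nonneg a], by linarith⟩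
        have h5 := hup (Real.cos |a|) hca (by rwa [Real.cos_abs])
        have h6 : a^2 * Real.log (Real.cos r) ≤ r^2 * Real.log (Real.cos |a|) := by
          rcases (abs_nonneg a).eq_or_lt with h7 | h7
          · rw [← h7, abs_eq_zero.1 h7.symm]; simp
          · have := chord_aux2 r |a| h7 har h1
            rwa [sq_abs] at this
        have h8 : Real.log (Real.cosh y) ≤ y^2/2 := by
          have := Real.log_le_log hcy (Real.cosh_le_exp_half_sq y)
          rwa [Real.log_exp] at this
        rw [← hcdef, hlc] at h6
        have h9 : r^2 * Real.log (Real.cos |a|) ≤ r^2 * (y^2/2 - L + t/c) := by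
          apply mul_le_mul_of_nonneg_left _ (sq_nonneg r); linarith
        have h10 : r^2 * (L - y^2/2 - t/c) ≤ a^2 * L := by nlinarith
        have : r^2 - r^2/(2*L)*y^2 - r^2/(L*c)*t = r^2 * (L - y^2/2 - t/c) / L := by field_simp
        rw [this, div_le_iff₀ hL0]; exact h10
    have h11 : min κ1 (θ*L/2) * min (y^2) |y| ≤ κ1 * y^2 :=
      mul_le_mul (min_le_left _ _) (min_le_left _ _) hmin0 hκ1p.le
    have h12 : 0 ≤ 2/c*t := by positivity
    rw [hκ1] at h11
    nlinarith
  · rw [max_eq_left hx1] at he1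
    have hcb := Real.cosh_pos b
    have h5 := hup (Real.cosh b) hcb he1
    have htc : t/c ≤ L/2 := by rw [div_le_iff₀ hc]; linarith
    have hby : |b| ≤ |y| := by
      rw [← Real.cosh_le_cosh]
      rw [← Real.log_le_log_iff hcb hcy]; linarith
    have h6 := logcosh_sq |b| |y| (abs_nonneg _) hby
    have h7 := logcosh_lin |b| |y| hby
    rw [Real.cosh_abs, Real.cosh_abs] at h6 h7
    rw [sq_abs, sq_abs] at h6
    have h8 : 2 * L - 2 * (t/c) ≤ y^2 - b^2 := by linarith
    have h9 : L/2 * |y| ≤ y^2 - b^2 := by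
      rw [← sq_abs y, ← sq_abs b]
      have : L/2 ≤ |y| - |b| := by linarith
      have h91 := mul_le_mul_of_nonneg_right this (add_nonneg (abs_nonneg y) (abs_nonneg b))
      have h92 : 0 ≤ L/2 * |b| := by positivity
      linarith
    have h10 : (1-θ) * (2 * L - 2 * (t/c)) + θ * (L/2*|y|) ≤ y^2 - b^2 := by
      have h101 := mul_le_mul_of_nonneg_left h8 (by linarith : 0 ≤ 1 - θ)
      have h102 := mul_le_mul_of_nonneg_left h9 hθp.le
      linarith
    have h11 : min κ1 (θ*L/2) * min (y^2) |y| ≤ (θ*L/2) * |y| :=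
      mul_le_mul (min_le_right _ _) (min_le_right _ _) hmin0 (by positivity)
    have h12 : 0 ≤ (r^2/(L*c) + 2) * t := by positivity
    have h13 : 2/c*t = 2*(t/c) := by ring
    have h14 : 0 ≤ t/c := by positivity
    have h15 : 0 ≤ θ * (t/c) := by positivity
    have h16 := sq_nonneg a
    linarith


section
open Polynomial Polynomial.Chebyshev

noncomputable def thT (t : ℝ) (w : ℂ) : ℂ := ∑' N : ℤ, Complex.exp (-(N:ℂ)^2 * t) * (T ℂ N).eval w

lemma th_hasSum (t : ℝ) (ht : 0 < t) (ζ : ℂ) :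
    HasSum (fun N : ℤ => Complex.exp (-(N:ℂ)^2 * t) * (T ℂ N).eval (Complex.cos ζ))
      (((√(π/t) : ℝ) : ℂ) * Complex.exp (-ζ^2/(4*t)) * jacobiTheta₂ (-Complex.I * ζ/(2*t)) (Complex.I * π / t)) := by
  have hpi : (π : ℂ) ≠ 0 := by exact_mod_cast Real.pi_ne_zero
  have htc : (t : ℂ) ≠ 0 := by exact_mod_cast ht.ne'
  have him : 0 < (Complex.I * t / π : ℂ).im := by
    have : (Complex.I * t / π : ℂ) = ((t/π : ℝ) : ℂ) * Complex.I := by push_cast; ring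
    rw [this]; simp; positivity
  have h1 := hasSum_jacobiTheta₂_term (ζ/(2*π)) him
  have h2 := hasSum_jacobiTheta₂_term (-(ζ/(2*π))) him
  rw [jacobiTheta₂_neg_left] at h2
  have h3 := (h1.add h2).div_const 2
  have hv : (jacobiTheta₂ (ζ/(2*π)) (Complex.I * t / π) + jacobiTheta₂ (ζ/(2*π)) (Complex.I * t / π))/2 = 
     (((√(π/t) : ℝ) : ℂ) * Complex.exp (-ζ^2/(4*t)) * jacobiTheta₂ (-Complex.I * ζ/(2*t)) (Complex.I * π / t)) := by
    rw [add_self_div_two, jacobiTheta₂_functional_equation]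
    congr 1
    · congr 1
      · have e1 : -Complex.I * (Complex.I * t / π) = ((t/π : ℝ) : ℂ) := by
          push_cast
          rw [← mul_div_assoc, ← mul_assoc, neg_mul, Complex.I_mul_I]; ring
        rw [e1, show (1/2 : ℂ) = ((1/2 : ℝ) : ℂ) by push_cast; ring, ← Complex.ofReal_cpow (by positivity), ← Real.sqrt_eq_rpow,
          Real.sqrt_div' _ pi_pos.le, Real.sqrt_div' _ ht.le]
        push_cast
        rw [one_div_div]
      · congr 1
        field_simp
        norm_num
    · congr 1
      · field_simp
        rw [Complex.I_sq]; ring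
      · field_simp
        rw [Complex.I_sq]
  rw [← hv]
  refine h3.congr_fun ?_ 
  intro N
  simp only [jacobiTheta₂_term]
  rw [T_complex_cos, Complex.cos, mul_div_assoc', mul_add, ← Complex.exp_add, ← Complex.exp_add]
  congr 2
  · congr 1
    field_simp
    linear_combination (-(N:ℂ)^2 * t) * Complex.I_sq
  · congr 1
    field_simp
    linear_combination (-(N:ℂ)^2 * t) * Complex.I_sq

lemma thT_cos (t : ℝ) (ht : 0 < t) (ζ : ℂ) : thT t (Complex.cos ζ) = 
    (((√(π/t) : ℝ) : ℂ) * Complex.exp (-ζ^2/(4*t)) * jacobiTheta₂ (-Complex.I * ζ/(2*t)) (Complex.I * π / t)) :=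
  (th_hasSum t ht ζ).tsum_eq

lemma summable_exp_int (η : ℝ) (hη : 0 < η) : Summable (fun n : ℤ => Real.exp (-(η * |(n:ℝ)|))) := by
  have h : Summable (fun n : ℕ => Real.exp (-(η * (n:ℝ)))) := by
    have := Real.summable_exp_nat_mul_iff.2 (show -η < 0 by linarith)
    refine this.congr fun n => ?_
    congr 1; ring
  apply Summable.of_nat_of_neg
  · simpa using h
  · simpa using h

lemma theta_bd : ∃ C : ℝ, 0 < C ∧ ∀ t : ℝ, 0 < t → t ≤ 1 → ∀ ζ : ℂ, |ζ.re| ≤ π/2 →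
    ‖jacobiTheta₂ (-Complex.I * ζ/(2*t)) (Complex.I * π / t) - 1‖ ≤ C * Real.exp (-1/t) := by
  refine ⟨∑' n : ℤ, Real.exp (-(1 * |(n:ℝ)|)), ?_, ?_⟩
  · exact (summable_exp_int 1 one_pos).tsum_pos (fun _ => (Real.exp_pos _).le) 0 (Real.exp_pos _)
  intro t ht ht1 ζ hζ
  have him : (Complex.I * π / t : ℂ).im = π/t := by
    have : (Complex.I * π / t : ℂ) = ((π/t : ℝ) : ℂ) * Complex.I := by push_cast; ring
    rw [this]; simp
  have hz : (-Complex.I * ζ/(2*t)).im = - ζ.re / (2*t) := by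
    have : -Complex.I * ζ/(2*t) = (-Complex.I * ζ) / ((2*t : ℝ) : ℂ) := by push_cast; ring
    rw [this, Complex.div_ofReal_im]; simp
  have h1 := hasSum_jacobiTheta₂_term (-Complex.I * ζ/(2*t)) (τ := Complex.I * π / t) (by rw [him]; positivity)
  have h2 := hasSum_ite_sub_hasSum h1 0
  have h0 : jacobiTheta₂_term 0 (-Complex.I * ζ/(2*t)) (Complex.I * π / t) = 1 := by simp [jacobiTheta₂_term]
  rw [h0] at h2
  have h3 := ((summable_exp_int 1 one_pos).mul_right (Real.exp (-1/t))).hasSum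
  rw [tsum_mul_right] at h3
  rw [← h2.tsum_eq]
  apply tsum_of_norm_bounded h3
  intro n
  split_ifs with hn
  · simp; positivity
  have h4 := norm_jacobiTheta₂_term_le (S := π/(4*t)) (T := π/t) (by positivity) (z := -Complex.I * ζ/(2*t)) (τ := Complex.I * π / t)
    (by rw [hz, neg_div, abs_neg, abs_div, abs_of_pos (by positivity : 0 < 2*t), div_le_div_iff₀ (by positivity) (by positivity)]; nlinarith)
    (by rw [him]) n
  refine h4.trans ?_
  rw [← Real.exp_add, Real.exp_le_exp]
  have hn1 : (1:ℝ) ≤ |(n:ℝ)| := by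
    have := Int.one_le_abs hn
    exact_mod_cast this
  have hn2 : |(n:ℝ)| ≤ (n:ℝ)^2 := by rw [← sq_abs]; nlinarith
  push_cast
  have e : -π * (π/t*(n:ℝ)^2 - 2*(π/(4*t))*|(n:ℝ)|) = -(π^2 * ((n:ℝ)^2 - |(n:ℝ)|/2)) / t := by field_simp; ring
  have e2 : -(1 * |(n:ℝ)|) + -1/t = -(t*|(n:ℝ)| + 1)/t := by field_simp; ring
  rw [e, e2, div_le_div_iff_of_pos_right ht, neg_le_neg_iff]
  have hpi := Real.pi_gt_three
  have h5 : 4 * ((n:ℝ)^2 - |(n:ℝ)|/2) ≤ π^2 * ((n:ℝ)^2 - |(n:ℝ)|/2) := by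
    apply mul_le_mul_of_nonneg_right <;> nlinarith
  have h6 : t * |(n:ℝ)| ≤ 1 * |(n:ℝ)| := by gcongr
  nlinarith

lemma exists_zeta (w : ℂ) (hw : 0 < w.re) : ∃ a b : ℝ, |a| ≤ π/2 ∧ Complex.cos (a + b * Complex.I) = w := by
  obtain ⟨ζ, hζ⟩ := Complex.cos_surjective w
  set k := round (ζ.re/(2*π)) with hk
  have hpi := Real.pi_pos
  have h1 := abs_sub_round (ζ.re/(2*π))
  have ha : |ζ.re - k * (2*π)| ≤ π := by
    have : ζ.re - k * (2*π) = (ζ.re/(2*π) - k) * (2*π) := by field_simp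
    rw [this, abs_mul, abs_of_pos (by positivity : 0 < 2*π)]
    nlinarith
  have hc : Complex.cos ((ζ.re - k * (2*π) : ℝ) + ζ.im * Complex.I) = w := by
    rw [← hζ, ← Complex.cos_sub_int_mul_two_pi ζ k]
    congr 1
    conv_rhs => rw [← Complex.re_add_im ζ]
    push_cast; ring
  refine ⟨_, _, ?_, hc⟩
  generalize ζ.re - k * (2*π) = a at *
  generalize ζ.im = b at *
  by_contra hcon
  push Not at hcon
  have h3 : Real.cos |a| ≤ 0 := Real.cos_nonpos_of_pi_div_two_le_of_le hcon.le (by linarith)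
  rw [Real.cos_abs] at h3
  have e : w.re = Real.cos a * Real.cosh b := by
    have e : Complex.cos (a + b * Complex.I) = ((Real.cos a * Real.cosh b : ℝ):ℂ) - ((Real.sin a * Real.sinh b : ℝ) : ℂ) * Complex.I := by
      rw [Complex.cos_add_mul_I]; push_cast; ring
    rw [← hc, e, Complex.sub_re, Complex.ofReal_re, Complex.re_ofReal_mul]
    simp
  have := Real.cosh_pos b
  nlinarith

lemma T_bound (N : ℤ) (a b : ℝ) : ‖(T ℂ N).eval (Complex.cos (a + b * Complex.I))‖ ≤ Real.exp (|(N:ℝ)| * |b|) := by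
  rw [T_complex_cos, Complex.cos, norm_div, Complex.norm_ofNat, div_le_iff₀ two_pos]
  refine (norm_add_le _ _).trans ?_
  rw [Complex.norm_exp, Complex.norm_exp]
  have e1 : (N * (a + b * Complex.I) * Complex.I : ℂ).re = -(N * b) := by simp
  have e2 : (-(N * (a + b * Complex.I)) * Complex.I : ℂ).re = N * b := by simp
  rw [e1, e2]
  have h1 : Real.exp (-((N:ℝ) * b)) ≤ Real.exp (|(N:ℝ)| * |b|) := by
    rw [Real.exp_le_exp, ← abs_mul]; exact neg_le_abs _
  have h2 : Real.exp ((N:ℝ) * b) ≤ Real.exp (|(N:ℝ)| * |b|) := by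
    rw [Real.exp_le_exp, ← abs_mul]; exact le_abs_self _
  linarith
end


lemma gap (r : ℝ) (h0 : 0 < r) (h1 : r < π/2) : ∃ M t1 : ℝ, 0 < t1 ∧ t1 ≤ 1 ∧ t1 < Real.cos r ∧ ∀ t, 0 < t → t ≤ t1 →
    ∀ s a b : ℝ, |a| ≤ π/2 → ‖Complex.cos (a + b * Complex.I) - (Real.cos r * Real.cosh (√t * s) : ℝ)‖ ≤ t →
    (r^2 - t * s^2 - a^2 + b^2)/(4*t) ≤ M - 4 * |s| := by
  obtain ⟨κ, M, t0, hκ, hM, ht0, H⟩ := L9 r h0 h1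
  have hc : 0 < Real.cos r := Real.cos_pos_of_mem_Ioo ⟨by linarith [Real.pi_pos], h1⟩
  set A := 16/κ with hA
  have hAp : 0 < A := by positivity
  have hAκ : κ * A = 16 := by rw [hA]; field_simp
  refine ⟨M/4 + κ*A^2/4, min (min t0 (1/A^2)) (min 1 (Real.cos r/2)), by positivity, 
    (min_le_right _ _).trans (min_le_left _ _), lt_of_le_of_lt ((min_le_right _ _).trans (min_le_right _ _)) (by linarith), ?_⟩
  intro t ht htt s a b ha hw
  have htt0 : t ≤ t0 := htt.trans ((min_le_left _ _).trans (min_le_left _ _))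
  have httA : t ≤ 1/A^2 := htt.trans ((min_le_left _ _).trans (min_le_right _ _))
  have h2 := H t ht htt0 (√t * s) a b ha hw
  have hst : 0 < √t := Real.sqrt_pos.2 ht
  have hsq : √t * √t = t := Real.mul_self_sqrt ht.le
  have hsA : √t * A ≤ 1 := by
    have : (√t * A)^2 ≤ 1 := by
      rw [mul_pow, sq (√t), hsq]
      rwa [le_div_iff₀ (by positivity)] at httA
    nlinarith [mul_pos hst hAp]
  have h3 : t * (A * |s| - A^2) ≤ min ((√t * s)^2) |√t * s| := by
    apply le_min
    · rw [mul_pow, sq (√t), hsq, ← sq_abs s]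
      apply mul_le_mul_of_nonneg_left _ ht.le
      nlinarith [sq_nonneg (|s| - A), abs_nonneg s]
    · rw [abs_mul, abs_of_pos hst]
      have : t * (A * |s|) = √t * |s| * (√t * A) := by linear_combination (-(A * |s|)) * hsq
      have h5 : √t * |s| * (√t * A) ≤ √t * |s| * 1 := by gcongr
      have : 0 ≤ t * A^2 := by positivity
      nlinarith
  have h4 := mul_le_mul_of_nonneg_left h3 hκ.le
  rw [mul_pow, sq (√t), hsq] at h2 h4
  rw [div_le_iff₀ (by positivity)]
  have h6 : κ * (t * (A * |s| - A^2)) = (κ * A) * t * |s| - κ * A^2 * t := by ring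
  rw [hAκ] at h6
  nlinarith

lemma s_sinh_bd (t s : ℝ) (ht : 0 < t) (ht1 : t ≤ 1) : |s * (Real.sinh (√t * s)/√t)| ≤ 2 * Real.exp (2*|s|) := by
  have hst : 0 < √t := Real.sqrt_pos.2 ht
  have hst1 : √t ≤ 1 := Real.sqrt_le_one.2 ht1
  have h1 : |Real.sinh (√t * s)| ≤ √t * |s| * Real.exp |s| := by
    rw [Real.abs_sinh, abs_mul, abs_of_pos hst]
    refine (sinh_le_mul_cosh _ (by positivity)).trans ?_
    gcongr
    rw [Real.cosh_eq]
    have h2 : Real.exp (√t * |s|) ≤ Real.exp |s| := Real.exp_le_exp.2 (by nlinarith [abs_nonneg s])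
    have h3 : Real.exp (-(√t * |s|)) ≤ Real.exp |s| := Real.exp_le_exp.2 (by nlinarith [abs_nonneg s, mul_nonneg hst.le (abs_nonneg s)])
    linarith
  rw [abs_mul, abs_div, abs_of_pos hst]
  have h2 : |Real.sinh (√t * s)|/√t ≤ |s| * Real.exp |s| := by
    rw [div_le_iff₀ hst]; linarith
  have h3 : |s| * |s| ≤ 2 * Real.exp |s| := by
    have := Real.quadratic_le_exp_of_nonneg (abs_nonneg s)
    nlinarith [abs_nonneg s]
  calc |s| * (|Real.sinh (√t * s)|/√t) ≤ |s| * (|s| * Real.exp |s|) := by gcongr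
    _ = |s| * |s| * Real.exp |s| := by ring
    _ ≤ 2 * Real.exp |s| * Real.exp |s| := by gcongr
    _ = _ := by rw [mul_assoc, ← Real.exp_add]; ring_nf

noncomputable def Wt (r t s φ : ℝ) : ℂ := ((Real.cos r * Real.cosh (√t * s) : ℝ) : ℂ) + t * Complex.exp (φ * Complex.I)

lemma Wt_zeta (r t s φ : ℝ) (ht : 0 < t) (htr : t < Real.cos r) : ∃ a b : ℝ, |a| ≤ π/2 ∧ Complex.cos (a + b * Complex.I) = Wt r t s φ ∧
    ‖Complex.cos (a + b * Complex.I) - (Real.cos r * Real.cosh (√t * s) : ℝ)‖ ≤ t := by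
  have hw : 0 < (Wt r t s φ).re := by
    have h2 : -t ≤ ((t : ℂ) * Complex.exp (φ * Complex.I)).re := by
      rw [Complex.re_ofReal_mul, Complex.exp_ofReal_mul_I_re]
      nlinarith [Real.neg_one_le_cos φ]
    rw [Wt, Complex.add_re, Complex.ofReal_re]
    nlinarith [Real.one_le_cosh (√t * s)]
  obtain ⟨a, b, ha, hc⟩ := exists_zeta _ hw
  refine ⟨a, b, ha, hc, ?_⟩
  rw [hc, Wt, add_sub_cancel_left, norm_mul, Complex.norm_exp_ofReal_mul_I, Complex.norm_real, Real.norm_eq_abs, abs_of_pos ht, mul_one]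

noncomputable def Hbase (r t s φ : ℝ) : ℂ :=
  ((s * (Real.sinh (√t * s)/√t) : ℝ) : ℂ) * ((Real.exp (r^2/(4*t)) * Real.exp (-s^2/4) * √(t/π) : ℝ) : ℂ) * thT t (Wt r t s φ)

lemma H_bd (r : ℝ) (h0 : 0 < r) (h1 : r < π/2) : ∃ C t1 : ℝ, 0 < t1 ∧ ∀ t, 0 < t → t ≤ t1 → ∀ s φ : ℝ,
    ‖Hbase r t s φ‖ ≤ C * Real.exp (-|s|) := by
  obtain ⟨M, t1, ht1, ht11, ht1c, H⟩ := gap r h0 h1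
  obtain ⟨C, hC, HC⟩ := theta_bd
  refine ⟨2 * Real.exp M * (1 + C), t1, ht1, ?_⟩
  intro t ht htt s φ
  obtain ⟨a, b, ha, hw, hn⟩ := Wt_zeta r t s φ ht (by linarith)
  have hg := H t ht htt s a b ha hn
  have hth := HC t ht (by linarith) (a + b * Complex.I) (by simpa using ha)
  have hth1 : ‖jacobiTheta₂ (-Complex.I * (a + b * Complex.I)/(2*t)) (Complex.I * π / t)‖ ≤ 1 + C := by
    have h2 := norm_le_norm_add_norm_sub 1 (jacobiTheta₂ (-Complex.I * (a + b * Complex.I)/(2*t)) (Complex.I * π / t))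
    rw [norm_one, norm_sub_rev] at h2
    have h3 : Real.exp (-1/t) ≤ 1 := Real.exp_le_one_iff.2 (div_nonpos_of_nonpos_of_nonneg (by norm_num) ht.le)
    nlinarith
  rw [Hbase, ← hw, thT_cos t ht, norm_mul, norm_mul, norm_mul, norm_mul, Complex.norm_real, Complex.norm_real, Complex.norm_real, Complex.norm_exp,
    Real.norm_eq_abs, Real.norm_eq_abs, Real.norm_eq_abs, abs_of_nonneg (Real.sqrt_nonneg (π/t)), abs_of_nonneg (by positivity : 0 ≤ Real.exp (r^2/(4*t)) * Real.exp (-s^2/4) * √(t/π))]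
  have e1 : (-((a:ℂ) + b * Complex.I)^2/(4*t)).re = (-a^2+b^2)/(4*t) := by
    have : -((a:ℂ) + b * Complex.I)^2/(4*t) = (((-a^2+b^2)/(4*t) : ℝ) : ℂ) + ((-2*a*b/(4*t) : ℝ):ℂ) * Complex.I := by
      push_cast
      linear_combination (-(b:ℂ)^2/(4*t)) * Complex.I_sq
    rw [this, Complex.add_re, Complex.ofReal_re, Complex.re_ofReal_mul]; simp
  rw [e1]
  have hss := s_sinh_bd t s ht (by linarith)
  have hroot : √(t/π) * √(π/t) = 1 := by
    rw [← Real.sqrt_mul (by positivity), show t/π*(π/t) = 1 by field_simp, Real.sqrt_one]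
  have hexp : Real.exp (r^2/(4*t)) * Real.exp (-s^2/4) * Real.exp ((-a^2+b^2)/(4*t)) ≤ Real.exp M * Real.exp (-(4*|s|)) := by
    rw [← Real.exp_add, ← Real.exp_add, ← Real.exp_add, Real.exp_le_exp]
    have : r^2/(4*t) + -s^2/4 + (-a^2+b^2)/(4*t) = (r^2 - t * s^2 - a^2 + b^2)/(4*t) := by field_simp; ring
    linarith
  calc _ = |s * (Real.sinh (√t * s)/√t)| * (Real.exp (r^2/(4*t)) * Real.exp (-s^2/4) * Real.exp ((-a^2+b^2)/(4*t))) * (√(t/π) * √(π/t)) * 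
          ‖jacobiTheta₂ (-Complex.I * (a + b * Complex.I)/(2*t)) (Complex.I * π / t)‖ := by ring
    _ ≤ (2 * Real.exp (2*|s|)) * (Real.exp M * Real.exp (-(4*|s|))) * 1 * (1 + C) := by
        rw [hroot]; gcongr
    _ = 2 * Real.exp M * (1 + C) * Real.exp (2*|s| + -(4*|s|)) := by rw [Real.exp_add]; ring
    _ ≤ _ := by gcongr; linarith [abs_nonneg s]


section
open Polynomial Polynomial.Chebyshev

noncomputable def FN (r t : ℝ) (N : ℤ) (s φ : ℝ) : ℂ :=
  ((√t * s * Real.sinh (√t * s) * Real.exp (-s^2/4) : ℝ) : ℂ) * (Complex.exp (-(N:ℂ)^2 * t) * (T ℂ N).eval (Wt r t s φ))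

lemma FN_hasSum (r t : ℝ) (ht : 0 < t) (s φ : ℝ) :
    HasSum (fun N : ℤ => FN r t N s φ) (((t * Real.exp (-(r^2/(4*t))) * √(π/t) : ℝ) : ℂ) * Hbase r t s φ) := by
  obtain ⟨ζ, hζ⟩ := Complex.cos_surjective (Wt r t s φ)
  have h := th_hasSum t ht ζ
  rw [← thT_cos t ht, hζ] at h
  have h2 := h.mul_left ((√t * s * Real.sinh (√t * s) * Real.exp (-s^2/4) : ℝ) : ℂ)
  suffices e : ((t * Real.exp (-(r^2/(4*t))) * √(π/t) : ℝ) : ℂ) * Hbase r t s φ =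
      ((√t * s * Real.sinh (√t * s) * Real.exp (-s^2/4) : ℝ) : ℂ) * thT t (Wt r t s φ) by
    rw [e]; exact h2
  unfold Hbase
  rw [← mul_assoc, ← mul_assoc]
  congr 1
  norm_cast
  have hroot : √(π/t) * √(t/π) = 1 := by
    rw [← Real.sqrt_mul (by positivity), show π/t*(t/π) = 1 by field_simp, Real.sqrt_one]
  have hexp : Real.exp (-(r^2/(4*t))) * Real.exp (r^2/(4*t)) = 1 := by rw [← Real.exp_add]; simp
  have hst : 0 < √t := Real.sqrt_pos.2 ht
  have hsq : t = √t * √t := (Real.mul_self_sqrt ht.le).symm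
  calc t * Real.exp (-(r^2/(4*t))) * √(π/t) * (s * (Real.sinh (√t * s)/√t)) * (Real.exp (r^2/(4*t)) * Real.exp (-s^2/4) * √(t/π))
     = t / √t * s * Real.sinh (√t * s) * Real.exp (-s^2/4) * (Real.exp (-(r^2/(4*t))) * Real.exp (r^2/(4*t))) * (√(π/t) * √(t/π)) := by ring
   _ = _ := by
      rw [hroot, hexp]
      have : t / √t = √t := by rw [div_eq_iff hst.ne']; exact hsq
      rw [this]; ring

lemma F_bd (r : ℝ) (h0 : 0 < r) (h1 : r < π/2) : ∃ t1 : ℝ, 0 < t1 ∧ ∀ t, 0 < t → t ≤ t1 → ∃ C η : ℝ, 0 < η ∧ 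
    ∀ (N : ℤ) (s φ : ℝ), ‖FN r t N s φ‖ ≤ C * Real.exp (-(η * |(N:ℝ)|)) * Real.exp (-|s|) := by
  obtain ⟨M, t1, ht1, ht11, ht1c, H⟩ := gap r h0 h1
  refine ⟨t1, ht1, ?_⟩
  intro t ht htt
  have hst : 0 < √t := Real.sqrt_pos.2 ht
  have hsq : √t * √t = t := (Real.mul_self_sqrt ht.le)
  -- constant
  obtain ⟨B, hB⟩ : ∃ B, B = |4*t*M| + π^2 := ⟨_, rfl⟩
  have hB0 : 0 ≤ B := by rw [hB]; positivity
  refine ⟨2 * Real.exp (M + π^2/(4*t) + (1 + B)/(2*√t) + 1), √t, hst, ?_⟩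
  intro N s φ
  obtain ⟨a, b, ha, hw, hn⟩ := Wt_zeta r t s φ ht (by linarith)
  have hg := H t ht htt s a b ha hn
  have ha2 : a^2 ≤ π^2 / 4 := by rw [← sq_abs]; nlinarith [abs_nonneg a]
  have hg2 : b^2 ≤ t * s^2 + B := by
    rw [div_le_iff₀ (by positivity)] at hg
    have := le_abs_self (4*t*M)
    have h5 : 0 ≤ t * |s| := by positivity
    nlinarith [sq_nonneg r, sq_nonneg π]
  have hb : |b| ≤ √t * |s| + (1 + B) := by
    apply abs_le_of_sq_le_sq _ (by positivity)
    have h6 : (√t * |s| + (1 + B))^2 = t * s^2 + 2 * (√t * |s|) * (1+B) + (1+B)^2 := by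
      rw [← hsq, ← sq_abs s]; rw [hsq]; linear_combination (|s|^2) * hsq
    rw [h6]
    have : 0 ≤ 2 * (√t * |s|) * (1+B) := by positivity
    nlinarith
  rw [FN, ← hw, norm_mul, norm_mul, Complex.norm_real, Complex.norm_exp, Real.norm_eq_abs]
  have hT := T_bound N a b
  have e1 : (-(N:ℂ)^2 * t).re = -(N:ℝ)^2 * t := by
    have : (-(N:ℂ)^2 * t) = ((-(N:ℝ)^2 * t : ℝ) : ℂ) := by push_cast; ring
    rw [this, Complex.ofReal_re]
  rw [e1]
  have hss := s_sinh_bd t s ht (by linarith)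
  have hs2 : |√t * s * Real.sinh (√t * s) * Real.exp (-s^2/4)| ≤ 2 * Real.exp (2*|s|) * Real.exp (-s^2/4) := by
    rw [abs_mul, abs_of_pos (Real.exp_pos _)]
    gcongr
    have : √t * s * Real.sinh (√t * s) = t * (s * (Real.sinh (√t * s)/√t)) := by
      field_simp; linear_combination (s * Real.sinh (√t * s)) * hsq
    rw [this, abs_mul, abs_of_pos ht]
    have : 0 ≤ |s * (Real.sinh (√t * s)/√t)| := abs_nonneg _
    nlinarith
  calc _ ≤ 2 * Real.exp (2*|s|) * Real.exp (-s^2/4) * (Real.exp (-(N:ℝ)^2 * t) * Real.exp (|(N:ℝ)| * |b|)) := by gcongr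
    _ = 2 * Real.exp (2*|s| + -s^2/4 + -(N:ℝ)^2*t + |(N:ℝ)| * |b|) := by rw [Real.exp_add, Real.exp_add, Real.exp_add]; ring
    _ ≤ 2 * Real.exp ((M + π^2/(4*t) + (1 + B)/(2*√t) + 1) + -(√t * |(N:ℝ)|) + -|s|) := by
      apply mul_le_mul_of_nonneg_left _ (by norm_num)
      rw [Real.exp_le_exp]
      have h7 : |(N:ℝ)| * (|b| + √t) ≤ (N:ℝ)^2*t + (|b|+√t)^2/(4*t) := by
        have : (N:ℝ)^2*t + (|b|+√t)^2/(4*t) - |(N:ℝ)| * (|b| + √t) = (2*t*|(N:ℝ)| - (|b|+√t))^2/(4*t) := by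
          rw [← sq_abs (N:ℝ)]; field_simp; ring
        have h8 : 0 ≤ (2*t*|(N:ℝ)| - (|b|+√t))^2/(4*t) := by positivity
        linarith
      have h9 : (|b|+√t)^2/(4*t) = b^2/(4*t) + |b|/(2*√t) + 1/4 := by
        have e : (4*t) = 4 * (√t * √t) := by rw [hsq]
        rw [← sq_abs b, e]; field_simp; ring
      have h10 : |b|/(2*√t) ≤ |s|/2 + (1+B)/(2*√t) := by
        rw [div_le_iff₀ (by positivity)]
        have : (|s|/2 + (1+B)/(2*√t)) * (2*√t) = √t * |s| + (1+B) := by field_simp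
        rw [this]; exact hb
      have h11 : (r^2 - t * s^2 - a^2 + b^2)/(4*t) = r^2/(4*t) - s^2/4 - a^2/(4*t) + b^2/(4*t) := by field_simp
      have h12 : a^2/(4*t) ≤ π^2/(4*t) := div_le_div_of_nonneg_right (by linarith [sq_nonneg π]) (by positivity)
      have h13 : 0 ≤ r^2/(4*t) := by positivity
      have h14 := abs_nonneg s
      rw [h11] at hg
      linarith
    _ = _ := by rw [Real.exp_add, Real.exp_add]; ring
end

lemma sinh_lim (k : ℝ) : Tendsto (fun t : ℝ => Real.sinh (√t * k)/√t) (𝓝[>] 0) (𝓝 k) := by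
  have h : HasDerivAt (fun u : ℝ => Real.sinh (u * k)) k 0 := by
    have := ((hasDerivAt_id (0:ℝ)).mul_const k).sinh
    simpa using this
  have h2 := h.tendsto_slope_zero
  have h3 : Tendsto (fun t : ℝ => √t) (𝓝[>] 0) (𝓝[≠] 0) := by
    apply tendsto_nhdsWithin_of_tendsto_nhds_of_eventually_within
    · have : Tendsto (fun t : ℝ => √t) (𝓝 0) (𝓝 (√0)) := Real.continuous_sqrt.tendsto 0
      rw [Real.sqrt_zero] at this
      exact this.mono_left nhdsWithin_le_nhds
    · filter_upwards [self_mem_nhdsWithin] with t ht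
      exact (Real.sqrt_pos.2 ht).ne'
  refine (h2.comp h3).congr fun t => ?_
  simp [div_eq_inv_mul]

lemma cosh_lim (k : ℝ) : Tendsto (fun t : ℝ => (Real.cosh (√t * k) - 1)/t) (𝓝[>] 0) (𝓝 (k^2/2)) := by
  have h := ((sinh_lim (k/2)).pow 2).const_mul 2
  have e : 2 * (k/2)^2 = k^2/2 := by ring
  rw [e] at h
  refine h.congr' ?_
  filter_upwards [self_mem_nhdsWithin] with t ht
  have ht : 0 < t := ht
  have e1 : Real.cosh (√t * k) = Real.cosh (√t * (k/2))^2 + Real.sinh (√t * (k/2))^2 := by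
    rw [← Real.cosh_two_mul]; congr 1; ring
  have e2 := Real.cosh_sq (√t * (k/2))
  rw [e1, e2, div_pow, Real.sq_sqrt ht.le]; ring


lemma H_lim (r : ℝ) (h0 : 0 < r) (h1 : r < π/2) (s φ : ℝ) :
    Tendsto (fun t : ℝ => Hbase r t s φ) (𝓝[>] 0)
      (𝓝 (((s^2 * Real.exp (-(1 - r * Real.cot r) * s^2/4) : ℝ) : ℂ) *
        Complex.exp ((r/(2*Real.sin r) : ℝ) * Complex.exp (φ * Complex.I)))) := by
  have hsin : 0 < Real.sin r := Real.sin_pos_of_pos_of_lt_pi h0 (by linarith [Real.pi_pos])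
  have hsc : Complex.sin (r:ℂ) ≠ 0 := by rw [← Complex.ofReal_sin]; exact_mod_cast hsin.ne'
  have hne : -Complex.sin (r:ℂ) ≠ 0 := neg_ne_zero.2 hsc
  have hf : HasStrictDerivAt Complex.cos (-Complex.sin (r:ℂ)) (r:ℂ) := Complex.hasStrictDerivAt_cos _
  obtain ⟨g, hg, hginv, hgr⟩ : ∃ g : ℂ → ℂ, HasDerivAt g (-Complex.sin (r:ℂ))⁻¹ (Complex.cos r) ∧
      (∀ᶠ x in 𝓝 (Complex.cos r), Complex.cos (g x) = x) ∧ g (Complex.cos r) = r := by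
    refine ⟨hf.localInverse _ _ _ hne, (hf.to_localInverse hne).hasDerivAt, hf.eventually_right_inverse hne, ?_⟩
    exact (hf.eventually_left_inverse hne).self_of_nhds
  have hQ : HasDerivAt (fun w => (g w)^2) (2 * (r:ℂ) * (-Complex.sin (r:ℂ))⁻¹) (Complex.cos r) := by
    have := hg.fun_pow 2
    rw [hgr] at this
    simpa using this
  -- d t
  set d : ℝ → ℂ := fun t => Wt r t s φ - Complex.cos r with hd
  have hcd : Tendsto (fun t : ℝ => (t:ℂ)⁻¹ • d t) (𝓝[>] 0) (𝓝 (((Real.cos r * (s^2/2) : ℝ) : ℂ) + Complex.exp (φ * Complex.I))) := by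
    have h2 := ((cosh_lim s).const_mul (Real.cos r))
    have h3 := (Complex.continuous_ofReal.tendsto _).comp h2
    have h4 := h3.add_const (Complex.exp (φ * Complex.I))
    refine h4.congr' ?_
    filter_upwards [self_mem_nhdsWithin] with t ht
    have htc : (t : ℂ) ≠ 0 := by exact_mod_cast (ne_of_gt ht)
    simp only [hd, Wt, Function.comp, smul_eq_mul]
    push_cast
    field_simp
    ring
  have hid : Tendsto (fun t : ℝ => (t:ℂ)) (𝓝[>] 0) (𝓝 0) := by
    have := Complex.continuous_ofReal.tendsto 0
    rw [Complex.ofReal_zero] at this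
    exact this.mono_left nhdsWithin_le_nhds
  have hd0 : Tendsto d (𝓝[>] 0) (𝓝 0) := by
    have h2 := hid.mul hcd
    rw [zero_mul] at h2
    refine h2.congr' ?_
    filter_upwards [self_mem_nhdsWithin] with t ht
    have htc : (t : ℂ) ≠ 0 := by exact_mod_cast (ne_of_gt ht)
    rw [smul_eq_mul, mul_inv_cancel_left₀ htc]
  have hlim := (hasFDerivWithinAt_univ.2 hQ.hasFDerivAt).lim hd0 (Eventually.of_forall fun _ => mem_univ _) hcd
  have hW : Tendsto (fun t => Wt r t s φ) (𝓝[>] 0) (𝓝 (Complex.cos r)) := by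
    have h2 := hd0.add_const (Complex.cos (r:ℂ))
    rw [zero_add] at h2
    refine h2.congr fun t => ?_
    simp [hd]
  have hgW : Tendsto (fun t => g (Wt r t s φ)) (𝓝[>] 0) (𝓝 r) := by
    have := hg.continuousAt.tendsto
    rw [hgr] at this
    exact this.comp hW
  have hre : ∀ᶠ t in 𝓝[>] (0:ℝ), |(g (Wt r t s φ)).re| ≤ π/2 := by
    have h2 : Tendsto (fun t => |(g (Wt r t s φ)).re|) (𝓝[>] 0) (𝓝 |r|) := by
      have := ((Complex.continuous_re.tendsto (r:ℂ)).comp hgW).abs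
      simpa using this
    rw [abs_of_pos h0] at h2
    exact (h2.eventually_lt_const h1).mono fun t h => h.le
  obtain ⟨C, hC, HC⟩ := theta_bd
  have hTh : Tendsto (fun t : ℝ => jacobiTheta₂ (-Complex.I * (g (Wt r t s φ))/(2*t)) (Complex.I * π / t)) (𝓝[>] 0) (𝓝 1) := by
    rw [tendsto_iff_norm_sub_tendsto_zero]
    have h2 : Tendsto (fun t : ℝ => C * Real.exp (-1/t)) (𝓝[>] 0) (𝓝 0) := by
      have h3 : Tendsto (fun t : ℝ => Real.exp (-t⁻¹)) (𝓝[>] 0) (𝓝 0) :=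
        Real.tendsto_exp_neg_atTop_nhds_zero.comp tendsto_inv_nhdsGT_zero
      have := h3.const_mul C
      rw [mul_zero] at this
      refine this.congr fun t => ?_
      congr 2; ring
    refine squeeze_zero' (Eventually.of_forall fun _ => norm_nonneg _) ?_ h2
    filter_upwards [hre, Ioc_mem_nhdsGT (zero_lt_one' ℝ)] with t ht ht1
    exact HC t ht1.1 ht1.2 _ ht
  have hexp : Tendsto (fun t : ℝ => Complex.exp ((-s^2/4 : ℝ) - ((t:ℂ)⁻¹ * ((g (Wt r t s φ))^2 - r^2))/4)) (𝓝[>] 0)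
      (𝓝 (Complex.exp ((-s^2/4 : ℝ) - ((((Real.cos r * (s^2/2) : ℝ) : ℂ) + Complex.exp (φ * Complex.I)) * (2 * (r:ℂ) * (-Complex.sin (r:ℂ))⁻¹))/4))) := by
    apply (Complex.continuous_exp.tendsto _).comp
    apply Tendsto.sub tendsto_const_nhds
    apply Tendsto.div_const
    simp only [hd, add_sub_cancel, hgr, smul_eq_mul] at hlim
    simpa using hlim
  have hss : Tendsto (fun t : ℝ => ((s * (Real.sinh (√t * s)/√t) : ℝ) : ℂ)) (𝓝[>] 0) (𝓝 ((s*s : ℝ) : ℂ)) :=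
    (Complex.continuous_ofReal.tendsto _).comp ((sinh_lim s).const_mul s)
  have hall := (hss.mul hexp).mul hTh
  have hval : ((s*s : ℝ) : ℂ) * Complex.exp ((-s^2/4 : ℝ) - ((((Real.cos r * (s^2/2) : ℝ) : ℂ) + Complex.exp (φ * Complex.I)) * (2 * (r:ℂ) * (-Complex.sin (r:ℂ))⁻¹))/4) * 1 = 
     (((s^2 * Real.exp (-(1 - r * Real.cot r) * s^2/4) : ℝ) : ℂ) *
        Complex.exp ((r/(2*Real.sin r) : ℝ) * Complex.exp (φ * Complex.I))) := by
    rw [mul_one, Real.cot_eq_cos_div_sin]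
    push_cast
    have hss : (s:ℂ)*s = s^2 := by ring
    rw [hss, mul_assoc ((s:ℂ)^2), ← Complex.exp_add]
    congr 2
    field_simp
    ring
  rw [hval] at hall
  refine hall.congr' ?_
  filter_upwards [self_mem_nhdsWithin, hW.eventually hginv] with t ht hcg
  have ht : 0 < t := ht
  have htc : (t : ℂ) ≠ 0 := by exact_mod_cast (ne_of_gt ht)
  rw [Hbase]
  conv_rhs => rw [← hcg]
  rw [thT_cos t ht]
  have hroot : (((√(t/π) : ℝ) : ℂ)) * ((√(π/t) : ℝ) : ℂ) = 1 := by
    norm_cast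
    rw [← Real.sqrt_mul (by positivity), show t/π*(π/t) = 1 by field_simp, Real.sqrt_one]
  have hee : Complex.exp ((-s^2/4 : ℝ) - ((t:ℂ)⁻¹ * ((g (Wt r t s φ))^2 - r^2))/4) = 
     ((Real.exp (r^2/(4*t)) : ℝ) : ℂ) * ((Real.exp (-s^2/4) : ℝ) : ℂ) * Complex.exp (-(g (Wt r t s φ))^2/(4*t)) := by
    push_cast
    rw [← Complex.exp_add, ← Complex.exp_add]
    congr 1
    field_simp
    ring
  rw [hee]
  push_cast at hroot ⊢
  linear_combination (-((s:ℂ) * (Complex.sinh (√t * s)/√t)) * Complex.exp (r^2/(4*t)) * Complex.exp (-s^2/4) * Complex.exp (-(g (Wt r t s φ))^2/(4*t)) *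
    jacobiTheta₂ (-Complex.I * (g (Wt r t s φ))/(2*t)) (Complex.I * π / t)) * hroot


section
open Polynomial Polynomial.Chebyshev

lemma cauchy12 (f : ℂ → ℂ) (hf : Differentiable ℂ f) (z : ℂ) (t : ℝ) (ht : 0 < t) (p : ℕ) :
    ∫ φ in Ioc 0 (2*π), Complex.exp (-(p * φ * Complex.I)) * f (z + t * Complex.exp (φ * Complex.I)) =
      2 * π * t^p / p.factorial * iteratedDeriv p f z := by
  have h := DiffContOnCl.circleIntegral_one_div_sub_center_pow_smul ht p (hf.diffContOnCl (s := Metric.ball z t))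
  rw [circleIntegral, intervalIntegral.integral_of_le Real.two_pi_pos.le] at h
  have htc : (t:ℂ) ≠ 0 := by exact_mod_cast ht.ne'
  have h2 : ∀ φ : ℝ, deriv (circleMap z t) φ • (1 / (circleMap z t φ - z) ^ (p+1)) • f (circleMap z t φ) =
      (Complex.I / t^p) * (Complex.exp (-(p * φ * Complex.I)) * f (z + t * Complex.exp (φ * Complex.I))) := by
    intro φ
    rw [deriv_circleMap, circleMap_sub_center]
    simp only [circleMap, zero_add, smul_eq_mul]
    rw [Complex.exp_neg, mul_assoc (p:ℂ), Complex.exp_nat_mul]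
    have := Complex.exp_ne_zero (φ * Complex.I)
    field_simp
    ring
  simp only [h2] at h
  rw [integral_const_mul] at h
  have hI := Complex.I_ne_zero
  have hp : ((p.factorial : ℕ) : ℂ) ≠ 0 := by exact_mod_cast p.factorial_ne_zero
  rw [smul_eq_mul] at h
  have h3 := congrArg (fun x => x * (t^p / Complex.I)) h
  have htp : (t:ℂ)^p ≠ 0 := pow_ne_zero _ htc
  generalize (∫ φ in Ioc 0 (2*π), Complex.exp (-(p * φ * Complex.I)) * f (z + t * Complex.exp (φ * Complex.I))) = A at h3 ⊢
  have h4 : Complex.I / (t:ℂ)^p * A * (t^p / Complex.I) = A := by field_simp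
  rw [h4] at h3
  rw [h3]
  field_simp

lemma iterDeriv_poly (P : ℂ[X]) (p : ℕ) (z : ℂ) : iteratedDeriv p (fun w => P.eval w) z = (derivative^[p] P).eval z := by
  rw [iteratedDeriv_eq_iterate]
  induction p generalizing P with
  | zero => rfl
  | succ p ih =>
    rw [Function.iterate_succ_apply, Function.iterate_succ_apply, ← ih]
    have : deriv (fun w => P.eval w) = fun w => (derivative P).eval w := by
      funext w
      exact Polynomial.deriv _
    rw [this]

lemma int_exp_abs : Integrable (fun s : ℝ => Real.exp (-|s|)) := by
  rw [← integrableOn_univ, ← Iic_union_Ioi (a := (0:ℝ))]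
  apply IntegrableOn.union
  · refine (integrableOn_exp_Iic 0).congr_fun ?_ measurableSet_Iic
    intro x hx
    simp [abs_of_nonpos (show x ≤ 0 from hx)]
  · refine (integrableOn_exp_neg_Ioi 0).congr_fun ?_ measurableSet_Ioi
    intro x hx
    simp [abs_of_pos (show 0 < x from hx)]

noncomputable def mu12 : Measure (ℝ × ℝ) := (volume : Measure ℝ).prod (volume.restrict (Ioc 0 (2*π)))

lemma int_exp_mu : Integrable (fun x : ℝ × ℝ => Real.exp (-|x.1|)) mu12 :=
  int_exp_abs.comp_fst _

noncomputable def GN (p : ℕ) (r t : ℝ) (N : ℤ) (x : ℝ × ℝ) : ℂ := Complex.exp (-(p * x.2 * Complex.I)) * FN r t N x.1 x.2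

lemma GN_cont (p : ℕ) (r t : ℝ) (N : ℤ) : Continuous (GN p r t N) := by
  unfold GN FN Wt
  have := Polynomial.continuous (T ℂ N)
  have h1 := Real.continuous_sinh
  have h2 := Real.continuous_cosh
  fun_prop

lemma norm_expI (p : ℕ) (φ : ℝ) : ‖Complex.exp (-(p * φ * Complex.I))‖ = 1 := by
  rw [Complex.norm_exp]; simp

lemma GN_norm (p : ℕ) (r t : ℝ) (N : ℤ) (x : ℝ × ℝ) : ‖GN p r t N x‖ = ‖FN r t N x.1 x.2‖ := by
  rw [GN, norm_mul, norm_expI, one_mul]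

lemma GN_int (p : ℕ) (r t : ℝ) (C η : ℝ) 
    (hb : ∀ (N : ℤ) (s φ : ℝ), ‖FN r t N s φ‖ ≤ C * Real.exp (-(η * |(N:ℝ)|)) * Real.exp (-|s|)) (N : ℤ) :
    Integrable (GN p r t N) mu12 := by
  refine (int_exp_mu.const_mul (C * Real.exp (-(η * |(N:ℝ)|)))).mono' (GN_cont p r t N).aestronglyMeasurable ?_
  filter_upwards with x
  rw [GN_norm]
  exact hb N x.1 x.2

lemma GN_hasSum (p : ℕ) (r t : ℝ) (ht : 0 < t) (C η : ℝ) (hη : 0 < η)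
    (hb : ∀ (N : ℤ) (s φ : ℝ), ‖FN r t N s φ‖ ≤ C * Real.exp (-(η * |(N:ℝ)|)) * Real.exp (-|s|)) :
    HasSum (fun N : ℤ => ∫ x, GN p r t N x ∂mu12) 
      (((t * Real.exp (-(r^2/(4*t))) * √(π/t) : ℝ) : ℂ) * ∫ x, Complex.exp (-(p * x.2 * Complex.I)) * Hbase r t x.1 x.2 ∂mu12) := by
  have h := hasSum_integral_of_summable_integral_norm (F := GN p r t) (μ := mu12) (GN_int p r t C η hb) ?_
  · have key : ∀ x : ℝ × ℝ, ∑' N : ℤ, GN p r t N x = ((t * Real.exp (-(r^2/(4*t))) * √(π/t) : ℝ) : ℂ) * (Complex.exp (-(p * x.2 * Complex.I)) * Hbase r t x.1 x.2) := ?_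
    · rw [← integral_const_mul]
      simp only [key] at h
      exact h
    intro x
    have := (FN_hasSum r t ht x.1 x.2).mul_left (Complex.exp (-(p * x.2 * Complex.I)))
    have e := this.tsum_eq
    unfold GN
    rw [e]; ring
  · refine Summable.of_nonneg_of_le (f := fun N : ℤ => (C * ∫ x, Real.exp (-|x.1|) ∂mu12) * Real.exp (-(η * |(N:ℝ)|))) (fun N => integral_nonneg (fun x => norm_nonneg _)) ?_ ((summable_exp_int η hη).mul_left _)
    intro N
    calc ∫ x, ‖GN p r t N x‖ ∂mu12 ≤ ∫ x, (C * Real.exp (-(η * |(N:ℝ)|))) * Real.exp (-|x.1|) ∂mu12 := by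
          apply integral_mono (GN_int p r t C η hb N).norm (int_exp_mu.const_mul _)
          intro x
          simp only
          rw [GN_norm]
          exact hb N x.1 x.2
      _ = _ := by rw [integral_const_mul]; ring

lemma GN_val (p : ℕ) (r t : ℝ) (ht : 0 < t) (C η : ℝ) 
    (hb : ∀ (N : ℤ) (s φ : ℝ), ‖FN r t N s φ‖ ≤ C * Real.exp (-(η * |(N:ℝ)|)) * Real.exp (-|s|)) (N : ℤ) :
    ∫ x, GN p r t N x ∂mu12 = ((2 * π * t^p / p.factorial * ∫ s : ℝ, √t * s * Real.sinh (√t * s) * Real.exp (-s^2/4) * (Real.exp (-(N:ℝ)^2 * t) * 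
      (derivative^[p] (T ℝ N)).eval (Real.cos r * Real.cosh (√t * s))) : ℝ) : ℂ) := by
  have hi := GN_int p r t C η hb N
  unfold mu12 at hi ⊢
  rw [integral_prod _ hi]
  rw [Complex.ofReal_mul, ← integral_complex_ofReal, ← integral_const_mul]
  congr 1
  funext s
  have hc := cauchy12 (fun w => (T ℂ N).eval w) (Polynomial.differentiable _) (((Real.cos r * Real.cosh (√t * s) : ℝ) : ℂ)) t ht p
  rw [iterDeriv_poly] at hc
  have hre : (derivative^[p] (T ℂ N)).eval (((Real.cos r * Real.cosh (√t * s) : ℝ) : ℂ)) = (((derivative^[p] (T ℝ N)).eval (Real.cos r * Real.cosh (√t * s)) : ℝ) : ℂ) := by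
    rw [← map_T Complex.ofRealHom, iterate_derivative_map]
    rw [Polynomial.eval_map, ← Complex.ofRealHom_eq_coe, Polynomial.eval₂_at_apply Complex.ofRealHom]
    rfl
  rw [hre] at hc
  have : ∀ φ : ℝ, GN p r t N (s, φ) = (((√t * s * Real.sinh (√t * s) * Real.exp (-s^2/4) : ℝ) : ℂ) * Complex.exp (-(N:ℂ)^2 * t)) * 
     (Complex.exp (-(p * φ * Complex.I)) * (T ℂ N).eval ((((Real.cos r * Real.cosh (√t * s) : ℝ) : ℂ)) + t * Complex.exp (φ * Complex.I))) := by
    intro φ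
    unfold GN FN Wt
    ring
  simp only [this]
  rw [integral_const_mul, hc]
  push_cast
  ring

lemma GN_neg (p : ℕ) (r t : ℝ) (N : ℤ) (x : ℝ × ℝ) : GN p r t (-N) x = GN p r t N x := by
  unfold GN FN
  rw [T_neg]; push_cast; rw [neg_sq]

lemma Hbase_meas (p : ℕ) (r t : ℝ) (ht : 0 < t) :
    AEStronglyMeasurable (fun x : ℝ × ℝ => Complex.exp (-(p * x.2 * Complex.I)) * Hbase r t x.1 x.2) mu12 := by
  have hc : (((t * Real.exp (-(r^2/(4*t))) * √(π/t) : ℝ) : ℂ)) ≠ 0 := by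
    norm_cast
    have := Real.pi_pos
    positivity
  have : AEStronglyMeasurable (fun x : ℝ × ℝ => Complex.exp (-(p * x.2 * Complex.I)) * ((((t * Real.exp (-(r^2/(4*t))) * √(π/t) : ℝ) : ℂ)) * Hbase r t x.1 x.2)) mu12 := by
    refine aestronglyMeasurable_of_tendsto_ae (atTop : Filter (Finset ℤ)) (f := fun S x => ∑ N ∈ S, GN p r t N x) ?_ ?_
    · intro S
      exact (continuous_finsetSum _ (fun N _ => GN_cont p r t N)).aestronglyMeasurable
    · filter_upwards with x
      exact (FN_hasSum r t ht x.1 x.2).mul_left _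
  have h2 := this.const_mul ((((t * Real.exp (-(r^2/(4*t))) * √(π/t) : ℝ) : ℂ))⁻¹)
  refine h2.congr (Eventually.of_forall fun x => ?_)
  simp only
  generalize (((t * Real.exp (-(r^2/(4*t))) * √(π/t) : ℝ) : ℂ)) = A at hc ⊢
  field_simp

end


section

lemma summ_poly_exp (q : ℕ) (a : ℝ) (ha : 0 < a) : Summable (fun m : ℕ => ((m:ℝ)+1)^q * Real.exp (-(a*m))) := by
  have h := Real.summable_pow_mul_exp_neg_nat_mul q ha
  have h2 := ((summable_nat_add_iff 1).2 h).mul_left (Real.exp a)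
  refine h2.congr ?_
  intro m
  push_cast
  rw [mul_left_comm, ← Real.exp_add]
  congr 2
  ring

lemma jac_abs (n : ℕ) (hn : 1 ≤ n) (J : ℕ → ℕ → ℕ → ℝ → ℝ) (hJ : IsJacobi J) (r : ℝ) (hr : r ∈ Set.Ioo 0 (π/2)) (m k : ℕ) :
    |J k (2*n-1) (m+1) (Real.cos (2*r))| ≤ ((k:ℝ)+1) * ((2*k+m+2*n+1 : ℕ) : ℝ)^k := by
  have hs : 0 < Real.sin r := Real.sin_pos_of_pos_of_lt_pi hr.1 (by linarith [hr.2, Real.pi_pos])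
  have hc : 0 < Real.cos r := Real.cos_pos_of_mem_Ioo ⟨by linarith [hr.1, Real.pi_pos], hr.2⟩
  have hsc := Real.sin_sq_add_cos_sq r
  have hx : Real.cos (2*r) ∈ Set.Ioo (-1:ℝ) 1 := by
    rw [Real.cos_two_mul]
    constructor <;> nlinarith
  rw [(hJ k (2*n-1) (m+1)).2 _ hx, aux_jac _ _ _ _ hx]
  refine (Finset.abs_sum_le_sum_abs _ _).trans ?_
  calc _ ≤ ∑ e ∈ Finset.range (k+1), ((2*k+m+2*n+1 : ℕ) : ℝ)^k := by
        apply Finset.sum_le_sum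
        intro e he
        have he : e ≤ k := by simpa [Nat.lt_succ_iff] using he
        rw [abs_mul, abs_mul, abs_mul, abs_pow, abs_neg, abs_one, one_pow, one_mul]
        have h1 : |((1 + Real.cos (2*r))/2)^(k-e)| ≤ 1 := by
          rw [abs_pow]
          apply pow_le_one₀ (abs_nonneg _)
          rw [abs_of_nonneg (by linarith [hx.1])]
          linarith [hx.2]
        have h2 : |(((m+1+k).choose e : ℕ) : ℝ)| ≤ ((2*k+m+2*n+1 : ℕ) : ℝ)^e := by
          rw [Nat.abs_cast]
          have := (Nat.choose_le_pow (m+1+k) e).trans (Nat.pow_le_pow_left (show m+1+k ≤ 2*k+m+2*n+1 by omega) e)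
          exact_mod_cast this
        have h3 : |(((2*n-1+(m+1)+2*k-e).choose (k-e) : ℕ) : ℝ)| ≤ ((2*k+m+2*n+1 : ℕ) : ℝ)^(k-e) := by
          rw [Nat.abs_cast]
          have := (Nat.choose_le_pow (2*n-1+(m+1)+2*k-e) (k-e)).trans (Nat.pow_le_pow_left (show 2*n-1+(m+1)+2*k-e ≤ 2*k+m+2*n+1 by omega) (k-e))
          exact_mod_cast this
        calc _ ≤ 1 * ((2*k+m+2*n+1 : ℕ) : ℝ)^e * ((2*k+m+2*n+1 : ℕ) : ℝ)^(k-e) := by gcongr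
          _ = _ := by rw [one_mul, ← pow_add]; congr 1; omega
    _ = _ := by rw [Finset.sum_const, Finset.card_range, nsmul_eq_mul]; push_cast; ring

lemma pTerm_summable (n : ℕ) (hn : 1 ≤ n) (J : ℕ → ℕ → ℕ → ℝ → ℝ) (hJ : IsJacobi J) (r : ℝ) (hr : r ∈ Set.Ioo 0 (π/2)) 
    (t : ℝ) (ht : 0 < t) : Summable (pTerm n J t r 0) := by
  obtain ⟨G, hG⟩ : ∃ G, G = |Real.Gamma (2 * n) / (2 * Real.pi ^ (2 * n + 2))| := ⟨_, rfl⟩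
  have hG0 : 0 ≤ G := hG ▸ abs_nonneg _
  obtain ⟨L, hL⟩ : ∃ L, L = Real.log (1/t) := ⟨_, rfl⟩
  have hn' : (1:ℝ) ≤ n := by exact_mod_cast hn
  have hA := summ_poly_exp (2*n+3) (4*n*t) (by positivity)
  have hB := (summ_poly_exp (2*n+4) 1 one_pos).mul_left (G * (2*n+1)^(2*n+3) * Real.exp ((L+1)^2/(8*t)))
  have hAB := Summable.mul_of_nonneg hA hB (fun m => by positivity) (fun k => by positivity)
  refine Summable.of_norm_bounded hAB ?_
  rintro ⟨m, k⟩
  simp only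
  obtain ⟨M, hM⟩ : ∃ M : ℕ, M = 2*k+m+2*n+1 := ⟨_, rfl⟩
  have hMr : (M:ℝ) = 2*k+m+2*n+1 := by rw [hM]; push_cast; ring
  have hM1 : (1:ℝ) ≤ M := by rw [hMr]; linarith [Nat.cast_nonneg (α := ℝ) k, Nat.cast_nonneg (α := ℝ) m]
  have hc : 0 < Real.cos r := Real.cos_pos_of_mem_Ioo ⟨by linarith [hr.1, Real.pi_pos], hr.2⟩
  have hk0 : (0:ℝ) ≤ k := Nat.cast_nonneg k
  have hm0 : (0:ℝ) ≤ m := Nat.cast_nonneg m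
  have hJb := jac_abs n hn J hJ r hr m k
  rw [← hM] at hJb
  have hch : (((k+m+2*n).choose (2*n-1) : ℕ) : ℝ) ≤ (M:ℝ)^(2*n) := by
    have h1 := (Nat.choose_le_pow (k+m+2*n) (2*n-1)).trans (Nat.pow_le_pow_left (show k+m+2*n ≤ M by omega) (2*n-1))
    have h2 := h1.trans (Nat.pow_le_pow_right (show 0 < M by omega) (show 2*n-1 ≤ 2*n by omega))
    exact_mod_cast h2
  have hv : vertFactor m 0 = m + 1 := by simp [vertFactor]
  have hcm : Real.cos r ^ m ≤ 1 := pow_le_one₀ hc.le (Real.cos_le_one r)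
  -- exponential estimate
  have hexp : Real.exp (-(4 * ((k:ℝ) * (k + 2*n + m + 1) + n * m)) * t) * (M:ℝ)^k ≤ 
      Real.exp (-(4*n*t*m)) * (Real.exp ((L+1)^2/(8*t)) * Real.exp (-(1*k))) := by
    have hMe : (M:ℝ) * Real.exp (-(M*t)) ≤ 1/t := by
      rw [Real.exp_neg, ← div_eq_mul_inv, div_le_div_iff₀ (Real.exp_pos _) ht]
      linarith [Real.add_one_le_exp (M*t)]
    have hMe2 : (M:ℝ) ≤ Real.exp (L + M*t) := by
      rw [Real.exp_add, hL, Real.exp_log (by positivity)]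
      rw [Real.exp_neg, ← div_eq_mul_inv, div_le_iff₀ (Real.exp_pos _)] at hMe
      exact hMe
    calc _ ≤ Real.exp (-(4 * ((k:ℝ) * (k + 2*n + m + 1) + n * m)) * t) * (Real.exp (L + M*t))^k := by gcongr
      _ = Real.exp (-(4 * ((k:ℝ) * (k + 2*n + m + 1) + n * m)) * t + k * (L + M*t)) := by
          rw [← Real.exp_nat_mul, ← Real.exp_add]
      _ ≤ Real.exp (-(4*n*t*m) + ((L+1)^2/(8*t) + -(1*k))) := by
          apply Real.exp_le_exp.2
          have hq : k * (L+1) - 2*k^2*t ≤ (L+1)^2/(8*t) := by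
            rw [le_div_iff₀ (by positivity)]
            nlinarith [sq_nonneg (4*k*t - (L+1))]
          rw [hMr]
          have h5 : 0 ≤ t * k * (6*n+3*m+3) := by positivity
          nlinarith
      _ = _ := by rw [Real.exp_add, Real.exp_add]
  have hMp : (M:ℝ) ≤ (2*n+1)*(k+1)*(m+1) := by
    rw [hMr]
    have h1 : (0:ℝ) ≤ (n-1)*k := by apply mul_nonneg; linarith; exact hk0
    have h2 : (0:ℝ) ≤ n*k*m := by positivity
    have h3 : (0:ℝ) ≤ k*m := by positivity
    have h4 : (0:ℝ) ≤ n*m := by positivity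
    nlinarith
  rw [pTerm, Real.norm_eq_abs]
  simp only
  rw [hv]
  rw [abs_mul, abs_mul, abs_mul, abs_mul, abs_mul, abs_mul, abs_mul, ← hG, ← hMr, Real.abs_exp, Nat.abs_cast, Nat.abs_cast, abs_of_nonneg (show (0:ℝ) ≤ m + 1 by linarith),
    abs_of_nonneg (pow_nonneg hc.le m)]
  have hmM : (m:ℝ) + 1 ≤ M := by rw [hMr]; linarith
  calc _ ≤ G * M * M * M^(2*n) * Real.exp (-(4 * ((k:ℝ) * (k + 2*n + m + 1) + n * m)) * t) * M * 1 * ((k+1) * (M:ℝ)^k) := by gcongr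
    _ = G * (M:ℝ)^(2*n+3) * (k+1) * (Real.exp (-(4 * ((k:ℝ) * (k + 2*n + m + 1) + n * m)) * t) * (M:ℝ)^k) := by ring
    _ ≤ G * ((2*n+1)*(k+1)*(m+1))^(2*n+3) * (k+1) * (Real.exp (-(4*n*t*m)) * (Real.exp ((L+1)^2/(8*t)) * Real.exp (-(1*k)))) := by gcongr
    _ = _ := by rw [mul_pow, mul_pow]; ring

lemma pKernel_fiber (n : ℕ) (hn : 1 ≤ n) (J : ℕ → ℕ → ℕ → ℝ → ℝ) (hJ : IsJacobi J) (r : ℝ) (hr : r ∈ Set.Ioo 0 (π/2)) 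
    (t : ℝ) (ht : 0 < t) : HasSum (fun j : ℕ => ∑ k ∈ Finset.range (j/2+1), pTerm n J t r 0 (j-2*k, k)) (pKernel n J t r 0) := by
  have h := (pTerm_summable n hn J hJ r hr t ht).hasSum.tsum_fiberwise (fun mk : ℕ × ℕ => mk.1 + 2 * mk.2)
  refine h.congr_fun ?_ 
  intro j
  have hset : ((fun mk : ℕ × ℕ => mk.1 + 2 * mk.2) ⁻¹' {j}) = ((Finset.range (j/2+1)).image (fun k => (j-2*k, k)) : Finset (ℕ × ℕ)) := by
    ext ⟨m, k⟩
    simp only [Set.mem_preimage, Set.mem_singleton_iff, Finset.coe_image, Set.mem_image, Finset.coe_range, Set.mem_Iio, Prod.mk.injEq]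
    constructor
    · intro h
      exact ⟨k, by omega, by omega, rfl⟩
    · rintro ⟨a, h1, h2, h3⟩
      omega
  rw [hset, Finset.tsum_subtype', Finset.sum_image]
  intro a _ b _ hab
  simpa using (Prod.mk.inj hab).2

end


section
open Polynomial Polynomial.Chebyshev

lemma half_sum (A : ℤ → ℂ) (S : ℂ) (p : ℕ) (hp : 1 ≤ p) (h : HasSum A S) (hneg : ∀ N, A (-N) = A N)
    (h0 : ∀ N : ℕ, N < p → A N = 0) : HasSum (fun j : ℕ => A ((j + p : ℕ) : ℤ)) (S / 2) := by
  have h1 := h.nat_add_neg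
  have h00 : A 0 = 0 := by simpa using h0 0 hp
  rw [h00, add_zero] at h1
  have h2 := h1.div_const 2
  have h3 : HasSum (fun n : ℕ => A n) (S/2) := by
    refine h2.congr_fun ?_
    intro n
    rw [hneg]; ring
  rw [← hasSum_nat_add_iff' p] at h3
  rw [Finset.sum_eq_zero (fun i hi => h0 i (Finset.mem_range.1 hi)), sub_zero] at h3
  exact h3

noncomputable def Kt (n : ℕ) (t : ℝ) : ℝ := Real.exp ((4*n^2+4*n)*t) / (2*π^(2*n+2)) / 2^(2*n) / (2*t) / √(4*π*t)

lemma fib_GN (n : ℕ) (hn : 1 ≤ n) (J : ℕ → ℕ → ℕ → ℝ → ℝ) (hJ : IsJacobi J) (r : ℝ) (hr : r ∈ Set.Ioo 0 (π/2)) 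
    (t : ℝ) (ht : 0 < t) (C η : ℝ) 
    (hb : ∀ (N : ℤ) (s φ : ℝ), ‖FN r t N s φ‖ ≤ C * Real.exp (-(η * |(N:ℝ)|)) * Real.exp (-|s|)) (j : ℕ) :
    ((∑ k ∈ Finset.range (j/2+1), pTerm n J t r 0 (j-2*k, k) : ℝ) : ℂ) = 
     ((Kt n t * √t * ((2*n+1).factorial / (2*π*t^(2*n+1))) : ℝ) : ℂ) * ∫ x, GN (2*n+1) r t ((j+(2*n+1) : ℕ) : ℤ) x ∂mu12 := by
  rw [fiber_sum n hn J hJ r hr t ht j, GN_val (2*n+1) r t ht C η hb, ← Complex.ofReal_mul]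
  congr 1
  rw [Kt]
  have hst : 0 < √t := Real.sqrt_pos.2 ht
  have hsq : √t ^ 2 = t := Real.sq_sqrt ht.le
  have hsub := Measure.integral_comp_mul_left (fun y : ℝ => y * Real.sinh y * rexp (-y^2/(4*t)) * (rexp (-((j+2*n+1 : ℕ):ℝ)^2 * t) * (derivative^[2*n+1] (T ℝ ((j+2*n+1 : ℕ):ℤ))).eval (Real.cos r * Real.cosh y))) (√t)
  rw [abs_of_pos (by positivity), smul_eq_mul, inv_mul_eq_div, eq_div_iff hst.ne'] at hsub
  rw [← hsub]
  have hfn : ∀ s : ℝ, √t * s * Real.sinh (√t * s) * rexp (-(√t * s)^2/(4*t)) * (rexp (-((j+2*n+1 : ℕ):ℝ)^2 * t) * (derivative^[2*n+1] (T ℝ ((j+2*n+1 : ℕ):ℤ))).eval (Real.cos r * Real.cosh (√t * s))) 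
     = √t * s * Real.sinh (√t * s) * Real.exp (-s^2/4) * (Real.exp (-((((j+(2*n+1) : ℕ) : ℤ):ℝ))^2 * t) * 
      (derivative^[2*n+1] (T ℝ ((j+(2*n+1) : ℕ) : ℤ))).eval (Real.cos r * Real.cosh (√t * s))) := by
    intro s
    rw [mul_pow, hsq, show -(t * s^2)/(4*t) = -s^2/4 by field_simp, ← add_assoc, Int.cast_natCast]
  simp only [hfn]
  have hp : ((2*n+1).factorial : ℝ) ≠ 0 := by exact_mod_cast (2*n+1).factorial_ne_zero
  have hpi := Real.pi_pos
  generalize (∫ s : ℝ, √t * s * Real.sinh (√t * s) * Real.exp (-s^2/4) * (Real.exp (-((((j+(2*n+1) : ℕ) : ℤ):ℝ))^2 * t) * 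
      (derivative^[2*n+1] (T ℝ ((j+(2*n+1) : ℕ) : ℤ))).eval (Real.cos r * Real.cosh (√t * s)))) = I
  generalize rexp ((4*n^2+4*n)*t) / (2*π^(2*n+2)) / 2^(2*n) / (2*t) / √(4*π*t) = K
  field_simp

lemma pKernel_int (n : ℕ) (hn : 1 ≤ n) (J : ℕ → ℕ → ℕ → ℝ → ℝ) (hJ : IsJacobi J) (r : ℝ) (hr : r ∈ Set.Ioo 0 (π/2)) : 
    ∃ t1 : ℝ, 0 < t1 ∧ ∀ t, 0 < t → t ≤ t1 → 
     ((pKernel n J t r 0 : ℝ) : ℂ) = 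
     ((Kt n t * √t * ((2*n+1).factorial / (2*π*t^(2*n+1))) * ((t * Real.exp (-(r^2/(4*t))) * √(π/t)) / 2) : ℝ) : ℂ) *
       ∫ x, Complex.exp (-(((2*n+1 : ℕ):ℂ) * x.2 * Complex.I)) * Hbase r t x.1 x.2 ∂mu12 := by
  obtain ⟨t1, ht1, H⟩ := F_bd r hr.1 hr.2
  refine ⟨t1, ht1, fun t ht htt => ?_⟩
  obtain ⟨C, η, hη, hb⟩ := H t ht htt
  have h1 := GN_hasSum (2*n+1) r t ht C η hη hb
  have h2 := half_sum _ _ (2*n+1) (by omega) h1 ?_ ?_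
  · have h3 := h2.mul_left (((Kt n t * √t * ((2*n+1).factorial / (2*π*t^(2*n+1))) : ℝ) : ℂ))
    have h4 := (Complex.hasSum_ofReal.2 (pKernel_fiber n hn J hJ r hr t ht))
    have h5 := h4.congr_fun (fun j => (fib_GN n hn J hJ r hr t ht C η hb j).symm)
    rw [h5.unique h3]
    push_cast
    ring
  · intro N
    simp only [GN_neg]
  · intro N hN
    rw [GN_val (2*n+1) r t ht C η hb]
    rw [iterate_derivative_eq_zero]
    · simp
    · rw [natDegree_T]; simpa using hN

lemma kappa_pos (r : ℝ) (h0 : 0 < r) (h1 : r < π/2) : 0 < 1 - r * Real.cot r := by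
  have hs : 0 < Real.sin r := Real.sin_pos_of_pos_of_lt_pi h0 (by linarith [Real.pi_pos])
  have hc : 0 < Real.cos r := Real.cos_pos_of_mem_Ioo ⟨by linarith [Real.pi_pos], h1⟩
  have := Real.lt_tan h0 h1
  rw [Real.tan_eq_sin_div_cos, lt_div_iff₀ hc] at this
  rw [Real.cot_eq_cos_div_sin, sub_pos, ← mul_div_assoc, div_lt_one hs]
  exact this

lemma gauss_sq (b : ℝ) (hb : 0 < b) : ∫ s : ℝ, s^2 * Real.exp (-b * s^2) = √(π/b) / (2*b) := by
  have h1 : Integrable (fun s : ℝ => s^2 * Real.exp (-b * s^2)) := by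
    have := integrable_rpow_mul_exp_neg_mul_sq hb (s := 2) (by norm_num)
    simpa using this
  have h2 := integrable_exp_neg_mul_sq hb
  have h3 := integrable_mul_exp_neg_mul_sq hb
  have key := integral_mul_deriv_eq_deriv_mul_of_integrable (u := fun s : ℝ => s) (u' := fun _ => 1) 
    (v := fun s : ℝ => (-1/(2*b)) * Real.exp (-b * s^2)) (v' := fun s => s * Real.exp (-b*s^2)) ?_ ?_ ?_ ?_ ?_
  · have e1 : ∀ s : ℝ, s * (s * Real.exp (-b*s^2)) = s^2 * Real.exp (-b * s^2) := fun s => by ring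
    have e2 : ∀ s : ℝ, 1 * ((-1/(2*b)) * Real.exp (-b * s^2)) = (-1/(2*b)) * Real.exp (-b * s^2) := fun s => by ring
    simp only [e1, e2] at key
    rw [key, integral_const_mul, integral_gaussian]
    ring
  · intro s _; exact hasDerivAt_id s
  · intro s _
    have := (((hasDerivAt_pow 2 s).const_mul (-b)).exp).const_mul (-1/(2*b))
    convert this using 1
    push_cast
    field_simp
  · refine h1.congr (Eventually.of_forall fun s => ?_)
    simp only [Pi.mul_apply]; ring
  · refine (h2.const_mul (-1/(2*b))).congr (Eventually.of_forall fun s => ?_)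
    simp
  · refine (h3.const_mul (-1/(2*b))).congr (Eventually.of_forall fun s => ?_)
    simp only [Pi.mul_apply]; ring

lemma lim_int (n : ℕ) (r : ℝ) (hr : r ∈ Set.Ioo 0 (π/2)) :
    Tendsto (fun t => ∫ x, Complex.exp (-(((2*n+1 : ℕ):ℂ) * x.2 * Complex.I)) * Hbase r t x.1 x.2 ∂mu12) (𝓝[>] 0)
     (𝓝 (((√(π/((1 - r * Real.cot r)/4)) / (2*((1 - r * Real.cot r)/4)) : ℝ) : ℂ) * 
       ((2 * π / (2*n+1).factorial * (r/(2*Real.sin r))^(2*n+1) : ℝ) : ℂ))) := by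
  obtain ⟨C, t1, ht1, H⟩ := H_bd r hr.1 hr.2
  have hk := kappa_pos r hr.1 hr.2
  have hev : ∀ᶠ t : ℝ in 𝓝[>] 0, 0 < t ∧ t ≤ t1 := by
    filter_upwards [Ioc_mem_nhdsGT ht1] with t ht using ht
  have h := tendsto_integral_filter_of_dominated_convergence (μ := mu12) (l := 𝓝[>] (0:ℝ)) 
    (F := fun t x => Complex.exp (-(((2*n+1 : ℕ):ℂ) * x.2 * Complex.I)) * Hbase r t x.1 x.2)
    (f := fun x => Complex.exp (-(((2*n+1 : ℕ):ℂ) * x.2 * Complex.I)) * ((((x.1^2 * Real.exp (-(1 - r * Real.cot r) * x.1^2/4) : ℝ) : ℂ) *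
        Complex.exp ((r/(2*Real.sin r) : ℝ) * Complex.exp (x.2 * Complex.I)))))
    (fun x => C * Real.exp (-|x.1|)) ?_ ?_ (int_exp_mu.const_mul C) ?_
  · convert h using 2
    have e : ∀ x : ℝ × ℝ, Complex.exp (-(((2*n+1 : ℕ):ℂ) * x.2 * Complex.I)) * ((((x.1^2 * Real.exp (-(1 - r * Real.cot r) * x.1^2/4) : ℝ) : ℂ) *
        Complex.exp ((r/(2*Real.sin r) : ℝ) * Complex.exp (x.2 * Complex.I)))) = 
      (((x.1^2 * Real.exp (-(1 - r * Real.cot r) * x.1^2/4) : ℝ) : ℂ)) * (Complex.exp (-(((2*n+1 : ℕ):ℂ) * x.2 * Complex.I)) * Complex.exp ((r/(2*Real.sin r) : ℝ) * (0 + (1:ℝ) * Complex.exp (x.2 * Complex.I)))) := by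
      intro x
      rw [zero_add, Complex.ofReal_one, one_mul]; ring
    simp only [e]
    rw [mu12, integral_prod_mul (fun s : ℝ => (((s^2 * Real.exp (-(1 - r * Real.cot r) * s^2/4) : ℝ) : ℂ))) (fun φ : ℝ => (Complex.exp (-(((2*n+1 : ℕ):ℂ) * φ * Complex.I)) * Complex.exp ((r/(2*Real.sin r) : ℝ) * (0 + (1:ℝ) * Complex.exp (φ * Complex.I)))))]
    congr 1
    · rw [integral_complex_ofReal, ← gauss_sq _ (by positivity)]
      congr 2
      funext s
      congr 2
      ring
    · rw [cauchy12 (fun z => Complex.exp ((r/(2*Real.sin r) : ℝ) * z)) (by fun_prop) 0 1 one_pos, iteratedDeriv_cexp_const_mul]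
      push_cast
      simp
  · filter_upwards [hev] with t ht
    exact Hbase_meas (2*n+1) r t ht.1
  · filter_upwards [hev] with t ht
    filter_upwards with x
    rw [norm_mul, norm_expI, one_mul]
    exact H t ht.1 ht.2 x.1 x.2
  · filter_upwards with x
    exact (H_lim r hr.1 hr.2 x.1 x.2).const_mul _

end

/-- small-time asymptotics of the subelliptic heat kernel on the horizontal
space: `p_t(r,0) ∼ (4πt)^{-(2n+3/2)} (r/sin r)^{2n+1} e^{-r²/(4t)} (1 - r cot r)^{-3/2}`. -/
theorem stmt_11 (n : ℕ) (hn : 1 ≤ n) (J : ℕ → ℕ → ℕ → ℝ → ℝ) (hJ : IsJacobi J)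
    (r : ℝ) (hr : r ∈ Set.Ioo 0 (π / 2)) :
    Filter.Tendsto (fun t : ℝ =>
      (4 * π * t) ^ (2 * (n : ℝ) + 3 / 2) * (Real.sin r / r) ^ (2 * n + 1) *
        (1 - r * Real.cot r) ^ ((3 : ℝ) / 2) * Real.exp (r ^ 2 / (4 * t)) *
        pKernel n J t r 0)
      (𝓝[>] 0) (𝓝 1) := by
  obtain ⟨t1, ht1, H⟩ := pKernel_int n hn J hJ r hr
  have hk := kappa_pos r hr.1 hr.2
  have hs : 0 < Real.sin r := Real.sin_pos_of_pos_of_lt_pi hr.1 (by linarith [hr.2, Real.pi_pos])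
  have hr0 : 0 < r := hr.1
  have hpi := Real.pi_pos
  have hL := (Complex.continuous_re.tendsto _).comp (lim_int n r hr)
  rw [← Complex.ofReal_mul, Complex.ofReal_re] at hL
  have hE : Tendsto (fun t : ℝ => Real.exp ((4*n^2+4*n)*t)) (𝓝[>] 0) (𝓝 1) := by
    have : Continuous (fun t : ℝ => Real.exp ((4*n^2+4*n)*t)) := by fun_prop
    have h := (this.tendsto 0).mono_left (nhdsWithin_le_nhds (s := Ioi 0))
    simpa using h
  have hf : ((2*n+1).factorial : ℝ) ≠ 0 := by exact_mod_cast (2*n+1).factorial_ne_zero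
  have hmain := (hE.mul_const (2^(2*n) * √π * (2*n+1).factorial / (4*π^2) * (Real.sin r / r) ^ (2 * n + 1) *
        (1 - r * Real.cot r) ^ ((3 : ℝ) / 2))).mul hL
  have hsp : √π * √π = π := Real.mul_self_sqrt hpi.le
  generalize (1 - r * Real.cot r) = κ at *
  have hκ : κ ^ ((3:ℝ)/2) = κ * √κ := by
    rw [show (3:ℝ)/2 = 1 + 1/2 by norm_num, Real.rpow_add hk, Real.rpow_one, ← Real.sqrt_eq_rpow]
  have hone : 1 * (2^(2*n) * √π * (2*n+1).factorial / (4*π^2) * (Real.sin r / r) ^ (2 * n + 1) *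
        κ ^ ((3 : ℝ) / 2)) * (√(π/(κ/4)) / (2*(κ/4)) * (2 * π / (2*n+1).factorial * (r/(2*Real.sin r))^(2*n+1))) = 1 := by
    have h4 : √(4:ℝ) = 2 := by rw [show (4:ℝ) = 2^2 by norm_num]; exact Real.sqrt_sq (by norm_num)
    have hq : √(π/(κ/4)) = 2 * √π / √κ := by
      rw [show π/(κ/4) = 4 * π / κ by field_simp, Real.sqrt_div (by positivity), Real.sqrt_mul (by norm_num), h4]
    have hsk : 0 < √κ := Real.sqrt_pos.2 hk
    have hrs : (Real.sin r / r) ^ (2 * n + 1) * (r/(2*Real.sin r))^(2*n+1) = 1 / (2^(2*n) * 2) := by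
      rw [← mul_pow, show Real.sin r / r * (r/(2*Real.sin r)) = 1/2 by field_simp, div_pow, one_pow, pow_succ]
    rw [hq, hκ]
    calc _ = ((Real.sin r / r) ^ (2 * n + 1) * (r/(2*Real.sin r))^(2*n+1)) * (√π * √π) * (2^(2*n) * 2) / π := by
          field_simp
      _ = 1 := by rw [hrs, hsp]; field_simp
  rw [hone] at hmain
  refine hmain.congr' ?_
  filter_upwards [Ioc_mem_nhdsGT ht1] with t ht
  have h0 := congrArg Complex.re (H t ht.1 ht.2)
  rw [Complex.ofReal_re, Complex.re_ofReal_mul] at h0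
  rw [h0]
  have ht0 : 0 < t := ht.1
  simp only [Function.comp]
  generalize (∫ x, Complex.exp (-(((2*n+1 : ℕ):ℂ) * x.2 * Complex.I)) * Hbase r t x.1 x.2 ∂mu12).re = I
  have hpw : (4*π*t) ^ (2*(n:ℝ) + 3/2) = (4*π*t)^(2*n) * (4*π*t) * √(4*π*t) := by
    rw [show 2*(n:ℝ) + 3/2 = ((2*n+1 : ℕ):ℝ) + 1/2 by push_cast; ring, Real.rpow_add (by positivity), Real.rpow_natCast, ← Real.sqrt_eq_rpow, pow_succ]
  have hst : 0 < √(4*π*t) := Real.sqrt_pos.2 (by positivity)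
  have hexp : Real.exp (r^2/(4*t)) * Real.exp (-(r^2/(4*t))) = 1 := by rw [← Real.exp_add]; simp
  have hroot : √t * √(π/t) = √π := by
    rw [← Real.sqrt_mul ht0.le, show t * (π/t) = π by field_simp]
  rw [hpw, Kt]
  have h44 : (4*π*t)^(2*n) = 2^(2*n) * 2^(2*n) * π^(2*n) * t^(2*n) := by
    rw [mul_pow, mul_pow, ← mul_pow (2:ℝ) 2]; norm_num
  rw [h44]
  generalize κ ^ ((3:ℝ)/2) = κ'
  generalize (Real.sin r / r)^(2*n+1) = S
  generalize Real.exp ((4*n^2+4*n)*t) = E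
  symm
  calc _ = (Real.exp (r^2/(4*t)) * Real.exp (-(r^2/(4*t)))) * (√t * √(π/t)) * (2^(2*n) * (2*n+1).factorial / (4*π^2) * S * κ' * E * I) := by
        rw [show π^(2*n+2) = π^(2*n) * π^2 by ring, show t^(2*n+1) = t^(2*n) * t by ring]
        field_simp
        ring
    _ = _ := by rw [hexp, hroot]; ring
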